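/- Let 0 < p ≤ 0.5, q = 1 − p, n an integer with σ² = npq ≥ 100. Then Δ_n(p) ≤ ℰ₁(p)/σ + 0.1618/σ², where ℰ₁(p) = (2 − p)/(3√(2π)) and Δ_n(p) = sup_{x ∈ ℝ} |F_{n,p}(x) − Φ((x − np)/√(npq))|. -/

import Mathlib

/-- The standard normal distribution function Φ. -/
noncomputable def Phi (x : ℝ) : ℝ :=
  (Real.sqrt (2 * Real.pi))⁻¹ * ∫ t in Set.Iio x, Real.exp (-t ^ 2 / 2)

/-- The left-continuous binomial distribution function
`F_{n,p}(x) = Σ_{0 ≤ i < x} C(n,i) p^i q^{n−i}`. -/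
noncomputable def binomCDF (n : ℕ) (p x : ℝ) : ℝ :=
  ∑ i ∈ Finset.range (n + 1),
    if (i : ℝ) < x then (n.choose i : ℝ) * p ^ i * (1 - p) ^ (n - i) else 0

/-- `Δ_n(p) = sup_x |F_{n,p}(x) − Φ((x − np)/√(npq))|`. -/
noncomputable def Delta (n : ℕ) (p : ℝ) : ℝ :=
  ⨆ x : ℝ, |binomCDF n p x - Phi ((x - n * p) / Real.sqrt (n * p * (1 - p)))|

/-!
Write `N = n + 1/3` and `x = (k + 2/3)/N`, the classical approximate median of the
`Beta(k + 1, n - k)` law. By the beta integral, `P(Bin(n, p) ≤ k)` decreases in `p` with density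
proportional to `p ^ k * (1 - p) ^ (n - 1 - k)`, that is, to
`exp (-N K(x, p)) / (p(1 - p)) ^ (2/3)` with `K` the relative entropy of Bernoulli laws. The
signed root `W(p)` of `2 N K(x, p)` pulls the normal density back to `φ(W) W'`, and the quotient
of the two densities is `C √(K/T)`, where
`T = (p - x)² / (2 (p(1 - p)) ^ (2/3) (x(1 - x)) ^ (1/3)) ≥ K`. Both densities have total mass
one, so `C ≥ 1`; and `1 - √(K/T)` is small, of the order of `W² / (N x(1 - x))`. Integrating,
`P(Bin ≤ k)` exceeds `Φ(-W)` by at most a multiple of `1/σ²`. A Taylor expansion of `K` then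
compares `-W` with `(k - np + (2 - p)/3)/σ`, and the shift by `(2 - p)/(3σ)` is the main term of
the bound. The lower bound is the upper bound for `1 - p`, by the reflection `i ↦ n - i`.
-/

section

open Real Set Filter Topology ProbabilityTheory MeasureTheory

local notation "φ" => gaussianPDFReal 0 1

theorem le_of_hasDerivAt_nonneg {f f' : ℝ → ℝ} {a b : ℝ} (hab : a ≤ b)
    (hf : ∀ t ∈ Icc a b, HasDerivAt f (f' t) t) (hf' : ∀ t ∈ Icc a b, 0 ≤ f' t) : f a ≤ f b :=
  monotoneOn_of_hasDerivWithinAt_nonneg (convex_Icc a b)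
    (fun t ht => (hf t ht).continuousAt.continuousWithinAt)
    (fun t ht => (hf t (interior_subset ht)).hasDerivWithinAt)
    (fun t ht => hf' t (interior_subset ht)) (left_mem_Icc.2 hab) (right_mem_Icc.2 hab) hab

theorem antitoneOn_Ioo_of_hasDerivAt_nonpos {f f' : ℝ → ℝ} {a b x : ℝ} (hx : x ∈ Ioo a b)
    (hf : ContinuousOn f (Ioo a b)) (hd : ∀ p ∈ Ioo a b, p ≠ x → HasDerivAt f (f' p) p)
    (hf' : ∀ p ∈ Ioo a b, p ≠ x → f' p ≤ 0) : AntitoneOn f (Ioo a b) := by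
  have hleft : Ioc a x ⊆ Ioo a b := Ioc_subset_Ioo_right hx.2
  have hright : Ico x b ⊆ Ioo a b := Ico_subset_Ioo_left hx.1
  rw [← Ioc_union_Ico_eq_Ioo hx.1 hx.2]
  refine AntitoneOn.union_right (c := x) ?_ ?_ (isGreatest_Ioc hx.1) (isLeast_Ico hx.2)
  · refine antitoneOn_of_hasDerivWithinAt_nonpos (f' := f') (convex_Ioc a x) (hf.mono hleft) ?_ ?_
      <;> rw [interior_Ioc] <;> intro p hp
    · exact (hd p (hleft (Ioo_subset_Ioc_self hp)) hp.2.ne).hasDerivWithinAt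
    · exact hf' p (hleft (Ioo_subset_Ioc_self hp)) hp.2.ne
  · refine antitoneOn_of_hasDerivWithinAt_nonpos (f' := f') (convex_Ico x b) (hf.mono hright) ?_ ?_
      <;> rw [interior_Ico] <;> intro p hp
    · exact (hd p (hright (Ioo_subset_Ico_self hp)) hp.1.ne').hasDerivWithinAt
    · exact hf' p (hright (Ioo_subset_Ico_self hp)) hp.1.ne'

theorem le_of_antitoneOn_Ioo_of_tendsto_nhdsGT {f : ℝ → ℝ} {a b l p : ℝ}
    (hf : AntitoneOn f (Ioo a b)) (hl : Tendsto f (𝓝[>] a) (𝓝 l)) (hp : p ∈ Ioo a b) : f p ≤ l := by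
  refine ge_of_tendsto hl ?_
  filter_upwards [Ioo_mem_nhdsGT hp.1] with y hy
  exact hf ⟨hy.1, hy.2.trans hp.2⟩ hp hy.2.le

theorem ge_of_antitoneOn_Ioo_of_tendsto_nhdsLT {f : ℝ → ℝ} {a b l p : ℝ}
    (hf : AntitoneOn f (Ioo a b)) (hl : Tendsto f (𝓝[<] b) (𝓝 l)) (hp : p ∈ Ioo a b) : l ≤ f p := by
  refine le_of_tendsto hl ?_
  filter_upwards [Ioo_mem_nhdsLT hp.2] with y hy
  exact hf hp ⟨hp.1.trans hy.1, hy.2⟩ hy.1.le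

/-! ### The standard normal law -/

theorem phi_apply (x : ℝ) : φ x = (√(2 * π))⁻¹ * exp (-x ^ 2 / 2) := by
  simp [gaussianPDFReal]

theorem phi_zero : φ 0 = (√(2 * π))⁻¹ := by simp [phi_apply]

theorem phi_pos (x : ℝ) : 0 < φ x := gaussianPDFReal_pos 0 1 x one_ne_zero

theorem phi_neg (x : ℝ) : φ (-x) = φ x := by simp only [phi_apply, neg_sq]

theorem phi_mul_exp (x : ℝ) : φ x * exp (x ^ 2 / 2) = φ 0 := by
  rw [phi_apply, phi_zero, mul_assoc, ← exp_add, neg_div, neg_add_cancel, exp_zero, mul_one]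

theorem phi_le_phi_of_abs_le {x y : ℝ} (h : |x| ≤ |y|) : φ y ≤ φ x := by
  have := sq_le_sq.2 h
  simp only [phi_apply]
  gcongr

theorem phi_le_phi_zero (x : ℝ) : φ x ≤ φ 0 := phi_le_phi_of_abs_le (by simp)

theorem phi_zero_le : φ 0 ≤ 0.4 := by
  have : 2.5 ≤ √(2 * π) := le_sqrt_of_sq_le (by linarith [pi_gt_d2])
  calc φ 0 = (√(2 * π))⁻¹ := phi_zero
    _ ≤ 2.5⁻¹ := by gcongr
    _ = 0.4 := by norm_num

theorem mul_phi_le (x : ℝ) : x * φ x ≤ φ 0 := by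
  rw [← phi_mul_exp x, mul_comm]
  refine mul_le_mul_of_nonneg_left ?_ (phi_pos x).le
  nlinarith [add_one_le_exp (x ^ 2 / 2), sq_nonneg (x - 1)]

theorem sq_mul_phi_le (x : ℝ) : x ^ 2 * φ x ≤ φ 0 := by
  rw [← phi_mul_exp x, mul_comm]
  refine mul_le_mul_of_nonneg_left ?_ (phi_pos x).le
  nlinarith [quadratic_le_exp_of_nonneg (x := x ^ 2 / 2) (by positivity),
    sq_nonneg (x ^ 2 / 2 - 1)]

theorem cube_mul_phi_le (x : ℝ) : x ^ 3 * φ x ≤ 2 * φ 0 := by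
  rw [← phi_mul_exp x, mul_comm, mul_left_comm]
  refine mul_le_mul_of_nonneg_left ?_ (phi_pos x).le
  nlinarith [quadratic_le_exp_of_nonneg (x := x ^ 2 / 2) (by positivity),
    mul_nonneg (sq_nonneg x) (sq_nonneg (x - 2))]

theorem hasDerivAt_phi (x : ℝ) : HasDerivAt φ (-x * φ x) x := by
  have hexponent : HasDerivAt (fun x : ℝ => -x ^ 2 / 2) (-x) x := by
    refine ((hasDerivAt_pow 2 x).neg.div_const 2).congr_deriv ?_
    push_cast
    ring
  rw [funext phi_apply]
  refine (hexponent.exp.const_mul (√(2 * π))⁻¹).congr_deriv ?_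
  ring

theorem tendsto_pow_mul_phi (m : ℕ) : Tendsto (fun x => x ^ m * φ x) (cocompact ℝ) (𝓝 0) := by
  have h := (tendsto_rpow_abs_mul_exp_neg_mul_sq_cocompact (a := 1 / 2) (by norm_num) m).const_mul
    (√(2 * π))⁻¹
  rw [mul_zero] at h
  refine (tendsto_zero_iff_abs_tendsto_zero _).2 (h.congr fun x => ?_)
  rw [Function.comp_apply, abs_mul, abs_pow, abs_of_pos (phi_pos x), phi_apply, rpow_natCast]
  ring_nf

theorem Phi_eq_cdf : Phi = cdf (gaussianReal 0 1) := by
  funext x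
  rw [cdf_eq_real, measureReal_def, gaussianReal_apply_eq_integral _ one_ne_zero,
    ENNReal.toReal_ofReal (integral_nonneg fun _ => gaussianPDFReal_nonneg _ _ _),
    integral_Iic_eq_integral_Iio, Phi, ← integral_const_mul]
  simp only [phi_apply]

theorem tendsto_Phi_atBot : Tendsto Phi atBot (𝓝 0) := Phi_eq_cdf ▸ tendsto_cdf_atBot _

theorem tendsto_Phi_atTop : Tendsto Phi atTop (𝓝 1) := Phi_eq_cdf ▸ tendsto_cdf_atTop _

theorem Phi_mono : Monotone Phi := Phi_eq_cdf ▸ monotone_cdf _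

theorem Phi_nonneg (x : ℝ) : 0 ≤ Phi x := Phi_eq_cdf ▸ cdf_nonneg _ x

theorem Phi_eq_integral_Iic (x : ℝ) : Phi x = ∫ t in Iic x, φ t := by
  simp only [Phi, phi_apply, integral_const_mul, integral_Iic_eq_integral_Iio]

theorem hasDerivAt_Phi (x : ℝ) : HasDerivAt Phi (φ x) x := by
  have hint : Integrable φ := integrable_gaussianPDFReal 0 1
  have hcont : Continuous φ :=
    continuous_iff_continuousAt.2 fun y => (hasDerivAt_phi y).continuousAt
  have hPhi : Phi = fun y => (∫ t in (0 : ℝ)..y, φ t) + Phi 0 := by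
    funext y
    rw [← intervalIntegral.integral_Iic_sub_Iic hint.integrableOn hint.integrableOn,
      ← Phi_eq_integral_Iic, ← Phi_eq_integral_Iic, sub_add_cancel]
  rw [hPhi]
  exact (hcont.integral_hasStrictDerivAt 0 x).hasDerivAt.add_const _

theorem continuous_Phi : Continuous Phi :=
  continuous_iff_continuousAt.2 fun x => (hasDerivAt_Phi x).continuousAt

theorem Phi_neg (x : ℝ) : Phi (-x) = 1 - Phi x := by
  have hderiv (y : ℝ) : HasDerivAt (fun y => Phi y + Phi (-y)) 0 y := by
    refine ((hasDerivAt_Phi y).add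
      ((hasDerivAt_Phi (-y)).comp y (hasDerivAt_neg y))).congr_deriv ?_
    rw [phi_neg]
    ring
  have hconst (y : ℝ) : Phi x + Phi (-x) = Phi y + Phi (-y) :=
    is_const_of_deriv_eq_zero (fun y => (hderiv y).differentiableAt) (fun y => (hderiv y).deriv) x y
  have hlim : Tendsto (fun y => Phi y + Phi (-y)) atTop (𝓝 (1 + 0)) :=
    tendsto_Phi_atTop.add (tendsto_Phi_atBot.comp tendsto_neg_atTop_atBot)
  linarith [tendsto_nhds_unique (tendsto_const_nhds.congr hconst) hlim]

theorem Phi_sub_Phi_le {x y M : ℝ} (hxy : x ≤ y) (hM : ∀ t ∈ Icc x y, φ t ≤ M) :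
    Phi y - Phi x ≤ M * (y - x) := by
  have := le_of_hasDerivAt_nonneg (f := fun t => M * t - Phi t) hxy
    (fun t _ => ((hasDerivAt_id t).const_mul M).sub (hasDerivAt_Phi t))
    (fun t ht => by rw [mul_one]; exact sub_nonneg.2 (hM t ht))
  linarith

theorem Phi_add_le (x : ℝ) {c : ℝ} (hc : 0 ≤ c) : Phi (x + c) ≤ Phi x + φ 0 * c := by
  have := Phi_sub_Phi_le (le_add_of_nonneg_right hc : x ≤ x + c) fun t _ => phi_le_phi_zero t
  rw [add_sub_cancel_left] at this
  linarith

theorem Phi_neg_sub_Phi_neg_le {u z : ℝ} (hu : 0 ≤ u) (huz : u ≤ z) :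
    Phi (-u) - Phi (-z) ≤ φ u * (z - u) := by
  have := Phi_sub_Phi_le (neg_le_neg huz) (M := φ u) fun t ht => phi_le_phi_of_abs_le (by
    rw [abs_of_nonneg hu]
    exact (le_neg_of_le_neg ht.2).trans (neg_le_abs t))
  linarith

theorem Phi_neg_le_phi {x : ℝ} (hx : 1 ≤ x) : Phi (-x) ≤ φ x := by
  have hlim : Tendsto (fun t => φ t - Phi (-t)) atTop (𝓝 (0 - 0)) := by
    have hφ : Tendsto φ atTop (𝓝 0) := by
      simpa only [pow_zero, one_mul] using (tendsto_pow_mul_phi 0).mono_left atTop_le_cocompact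
    exact hφ.sub (tendsto_Phi_atBot.comp tendsto_neg_atTop_atBot)
  rw [sub_zero] at hlim
  refine sub_nonneg.1 (le_of_tendsto hlim ?_)
  filter_upwards [eventually_ge_atTop x] with y hy
  simp only [Phi_neg]
  have := le_of_hasDerivAt_nonneg (f := fun t => (1 - Phi t) - φ t) hy
    (fun t _ => ((hasDerivAt_Phi t).const_sub 1).sub (hasDerivAt_phi t))
    (fun t ht => by nlinarith [phi_pos t, ht.1])
  linarith

/-! ### The relative entropy of Bernoulli laws -/

/-- Relative entropy of the Bernoulli law with parameter `x` with respect to the one with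
parameter `p`; the logarithms of the ratios are split so that they can be differentiated. -/
noncomputable def bernoulliKL (x p : ℝ) : ℝ :=
  x * (log x - log p) + (1 - x) * (log (1 - x) - log (1 - p))

theorem one_sub_mem_Ioo {x : ℝ} (hx : x ∈ Ioo (0 : ℝ) 1) : 1 - x ∈ Ioo (0 : ℝ) 1 :=
  ⟨sub_pos.2 hx.2, sub_lt_self 1 hx.1⟩

theorem mul_one_sub_pos {x : ℝ} (hx : x ∈ Ioo (0 : ℝ) 1) : 0 < x * (1 - x) :=
  mul_pos hx.1 (sub_pos.2 hx.2)

theorem hasDerivAt_mul_one_sub (p : ℝ) : HasDerivAt (fun p : ℝ => p * (1 - p)) (1 - 2 * p) p := by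
  refine ((hasDerivAt_id p).mul ((hasDerivAt_id p).const_sub 1)).congr_deriv ?_
  simp only [id]
  ring

theorem bernoulliKL_self (x : ℝ) : bernoulliKL x x = 0 := by simp [bernoulliKL]

theorem bernoulliKL_one_sub (x p : ℝ) : bernoulliKL (1 - x) (1 - p) = bernoulliKL x p := by
  simp only [bernoulliKL, sub_sub_cancel]
  ring

theorem bernoulliKL_eq_klFun {x p : ℝ} (hx : x ∈ Ioo (0 : ℝ) 1) (hp : p ∈ Ioo (0 : ℝ) 1) :
    bernoulliKL x p = p * InformationTheory.klFun (x / p) +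
      (1 - p) * InformationTheory.klFun ((1 - x) / (1 - p)) := by
  have hy := one_sub_mem_Ioo hx
  have hq := one_sub_mem_Ioo hp
  rw [InformationTheory.klFun_apply, InformationTheory.klFun_apply,
    log_div hx.1.ne' hp.1.ne', log_div hy.1.ne' hq.1.ne', bernoulliKL]
  field_simp [hp.1.ne', hq.1.ne']
  ring

theorem bernoulliKL_nonneg {x p : ℝ} (hx : x ∈ Ioo (0 : ℝ) 1) (hp : p ∈ Ioo (0 : ℝ) 1) :
    0 ≤ bernoulliKL x p := by
  rw [bernoulliKL_eq_klFun hx hp]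
  have hfst := InformationTheory.klFun_nonneg (div_pos hx.1 hp.1).le
  have hsnd := InformationTheory.klFun_nonneg
    (div_pos (one_sub_mem_Ioo hx).1 (one_sub_mem_Ioo hp).1).le
  exact add_nonneg (mul_nonneg hp.1.le hfst) (mul_nonneg (one_sub_mem_Ioo hp).1.le hsnd)

theorem bernoulliKL_pos {x p : ℝ} (hx : x ∈ Ioo (0 : ℝ) 1) (hp : p ∈ Ioo (0 : ℝ) 1)
    (hpx : p ≠ x) : 0 < bernoulliKL x p := by
  have hxp : 0 ≤ x / p := (div_pos hx.1 hp.1).le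
  have hfst : 0 < InformationTheory.klFun (x / p) := by
    refine (InformationTheory.klFun_nonneg hxp).lt_of_ne' fun h => hpx ?_
    rw [InformationTheory.klFun_eq_zero_iff hxp, div_eq_one_iff_eq hp.1.ne'] at h
    exact h.symm
  have hsnd := InformationTheory.klFun_nonneg
    (div_pos (one_sub_mem_Ioo hx).1 (one_sub_mem_Ioo hp).1).le
  rw [bernoulliKL_eq_klFun hx hp]
  exact add_pos_of_pos_of_nonneg (mul_pos hp.1 hfst) (mul_nonneg (one_sub_mem_Ioo hp).1.le hsnd)

theorem hasDerivAt_bernoulliKL_right (x : ℝ) {p : ℝ} (hp : p ∈ Ioo (0 : ℝ) 1) :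
    HasDerivAt (bernoulliKL x) ((p - x) / (p * (1 - p))) p := by
  have hp0 := hp.1
  have hq0 := (one_sub_mem_Ioo hp).1
  have hfst := ((hasDerivAt_log hp0.ne').const_sub (log x)).const_mul x
  have hsnd := ((((hasDerivAt_id p).const_sub 1).log hq0.ne').const_sub
    (log (1 - x))).const_mul (1 - x)
  refine (hfst.add hsnd).congr_deriv ?_
  simp only [id]
  field_simp
  ring

theorem hasDerivAt_bernoulliKL_left (p : ℝ) {x : ℝ} (hx : x ∈ Ioo (0 : ℝ) 1) :
    HasDerivAt (fun x => bernoulliKL x p) (log x - log p - (log (1 - x) - log (1 - p))) x := by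
  have hx0 := hx.1
  have hy0 := (one_sub_mem_Ioo hx).1
  have hfst := (hasDerivAt_id x).mul ((hasDerivAt_log hx0.ne').sub_const (log p))
  have hsnd := ((hasDerivAt_id x).const_sub 1).mul
    ((((hasDerivAt_id x).const_sub 1).log hy0.ne').sub_const (log (1 - p)))
  refine (hfst.add hsnd).congr_deriv ?_
  simp only [id]
  field_simp
  ring

theorem bernoulliKL_le_bernoulliKL {x s p : ℝ} (hx : 0 < x) (hxs : x ≤ s) (hsp : s ≤ p)
    (hp : p < 1) : bernoulliKL x s ≤ bernoulliKL x p := by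
  have hmem {t : ℝ} (ht : t ∈ Icc s p) : t ∈ Ioo (0 : ℝ) 1 :=
    ⟨hx.trans_le (hxs.trans ht.1), ht.2.trans_lt hp⟩
  refine le_of_hasDerivAt_nonneg hsp (fun t ht => hasDerivAt_bernoulliKL_right x (hmem ht))
    fun t ht => div_nonneg ?_ (mul_one_sub_pos (hmem ht)).le
  linarith [ht.1]

theorem tendsto_bernoulliKL_nhdsGT_zero {x : ℝ} (hx : 0 < x) :
    Tendsto (bernoulliKL x) (𝓝[>] 0) atTop := by
  have hfst : Tendsto (fun p => x * (log x - log p)) (𝓝[>] 0) atTop :=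
    (tendsto_atTop_add_const_left _ _
      (tendsto_neg_atBot_atTop.comp tendsto_log_nhdsGT_zero)).const_mul_atTop hx
  have hsnd : ContinuousAt (fun p => (1 - x) * (log (1 - x) - log (1 - p))) 0 := by
    have : ContinuousAt (fun p : ℝ => log (1 - p)) 0 := ContinuousAt.log (by fun_prop) (by norm_num)
    fun_prop
  exact hfst.atTop_add (hsnd.tendsto.mono_left nhdsWithin_le_nhds)

/-- The weight `v ^ (-2/3) * v₀ ^ (-1/3)`, where `v = p (1 - p)` and `v₀ = x (1 - x)` are the
Bernoulli variances. -/
noncomputable def varWeight (x p : ℝ) : ℝ :=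
  (p * (1 - p)) ^ (-(2 / 3) : ℝ) * (x * (1 - x)) ^ (-(1 / 3) : ℝ)

theorem varWeight_pos {x p : ℝ} (hx : x ∈ Ioo (0 : ℝ) 1) (hp : p ∈ Ioo (0 : ℝ) 1) :
    0 < varWeight x p :=
  mul_pos (rpow_pos_of_pos (mul_one_sub_pos hp) _) (rpow_pos_of_pos (mul_one_sub_pos hx) _)

theorem hasDerivAt_varWeight (x : ℝ) {p : ℝ} (hp : p ∈ Ioo (0 : ℝ) 1) :
    HasDerivAt (varWeight x) (-(2 / 3) * (1 - 2 * p) / (p * (1 - p)) * varWeight x p) p := by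
  have hv := mul_one_sub_pos hp
  refine (((hasDerivAt_mul_one_sub p).rpow_const (p := (-(2 / 3) : ℝ))
    (Or.inl hv.ne')).mul_const ((x * (1 - x)) ^ (-(1 / 3) : ℝ))).congr_deriv ?_
  rw [rpow_sub_one hv.ne', varWeight]
  ring

theorem mul_varWeight {x p : ℝ} (hx : x ∈ Ioo (0 : ℝ) 1) (hp : p ∈ Ioo (0 : ℝ) 1) :
    x * (1 - x) * varWeight x p = (x * (1 - x) / (p * (1 - p))) ^ (2 / 3 : ℝ) := by
  have hv := mul_one_sub_pos hp
  have hv0 := mul_one_sub_pos hx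
  rw [div_rpow hv0.le hv.le, varWeight, rpow_neg hv.le, mul_left_comm,
    ← rpow_one_add' hv0.le (by norm_num), mul_comm]
  norm_num [div_eq_mul_inv]

/-- A quadratic approximation of the relative entropy with the same third derivative at `p = x`. -/
noncomputable def klApprox (x p : ℝ) : ℝ := (p - x) ^ 2 / 2 * varWeight x p

/-- The ratio of the derivatives of `klApprox x` and of `bernoulliKL x`. -/
noncomputable def klSlope (x p : ℝ) : ℝ :=
  (p * (1 - p) - (p - x) * (1 - 2 * p) / 3) * varWeight x p

theorem klApprox_self (x : ℝ) : klApprox x x = 0 := by simp [klApprox]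

theorem klSlope_self {x : ℝ} (hx : x ∈ Ioo (0 : ℝ) 1) : klSlope x x = 1 := by
  simp only [klSlope, sub_self, zero_mul, zero_div, sub_zero]
  rw [mul_varWeight hx hx, div_self (mul_one_sub_pos hx).ne', one_rpow]

theorem klApprox_one_sub (x p : ℝ) : klApprox (1 - x) (1 - p) = klApprox x p := by
  simp only [klApprox, varWeight, sub_sub_cancel]
  rw [mul_comm (1 - p) p, mul_comm (1 - x) x]
  ring

theorem klApprox_pos {x p : ℝ} (hx : x ∈ Ioo (0 : ℝ) 1) (hp : p ∈ Ioo (0 : ℝ) 1) (hpx : p ≠ x) :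
    0 < klApprox x p := by
  have := varWeight_pos hx hp
  unfold klApprox
  positivity

theorem hasDerivAt_klApprox (x : ℝ) {p : ℝ} (hp : p ∈ Ioo (0 : ℝ) 1) :
    HasDerivAt (klApprox x) ((p - x) / (p * (1 - p)) * klSlope x p) p := by
  have hp0 := hp.1
  have hq0 := (one_sub_mem_Ioo hp).1
  refine (((((hasDerivAt_id p).sub_const x).pow 2).div_const 2).mul
    (hasDerivAt_varWeight x hp)).congr_deriv ?_
  simp only [id, klSlope, Pi.pow_apply, Nat.cast_ofNat, Nat.add_one_sub_one, pow_one, mul_one]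
  field_simp
  ring

theorem hasDerivAt_klSlope (x : ℝ) {p : ℝ} (hp : p ∈ Ioo (0 : ℝ) 1) :
    HasDerivAt (klSlope x)
      (2 / 9 * ((p - x) / (p * (1 - p))) * (1 - p * (1 - p)) * varWeight x p) p := by
  have hp0 := hp.1
  have hq0 := (one_sub_mem_Ioo hp).1
  have hpoly : HasDerivAt (fun p : ℝ => p * (1 - p) - (p - x) * (1 - 2 * p) / 3)
      (2 / 3 * (1 - 2 * p + (p - x))) p := by
    refine ((hasDerivAt_mul_one_sub p).sub ((((hasDerivAt_id p).sub_const x).mul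
      (((hasDerivAt_id p).const_mul 2).const_sub 1)).div_const 3)).congr_deriv ?_
    simp only [id]
    ring
  refine (hpoly.mul (hasDerivAt_varWeight x hp)).congr_deriv ?_
  field_simp
  ring

-- AM-GM with weights `2/3` and `1/3` for the two variances.
theorem one_le_klSlope {x p : ℝ} (hx : x ∈ Ioo (0 : ℝ) 1) (hp : p ∈ Ioo (0 : ℝ) 1) :
    1 ≤ klSlope x p := by
  have hv := mul_one_sub_pos hp
  have hv0 := mul_one_sub_pos hx
  have amgm := geom_mean_le_arith_mean2_weighted (by norm_num : (0 : ℝ) ≤ 2 / 3)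
    (by norm_num : (0 : ℝ) ≤ 1 / 3) hv.le hv0.le (by norm_num)
  calc 1 = (p * (1 - p)) ^ (2 / 3 : ℝ) * (x * (1 - x)) ^ (1 / 3 : ℝ) * varWeight x p := by
        rw [varWeight, rpow_neg hv.le, rpow_neg hv0.le, ← mul_inv, mul_inv_cancel₀]
        exact (mul_pos (rpow_pos_of_pos hv _) (rpow_pos_of_pos hv0 _)).ne'
    _ ≤ klSlope x p := by
        refine mul_le_mul_of_nonneg_right (amgm.trans ?_) (varWeight_pos hx hp).le
        nlinarith [sq_nonneg (p - x)]

theorem bernoulliKL_le_klApprox_of_le {x p : ℝ} (hx : 0 < x) (hxp : x ≤ p) (hp : p < 1) :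
    bernoulliKL x p ≤ klApprox x p := by
  have hmem {t : ℝ} (ht : t ∈ Icc x p) : t ∈ Ioo (0 : ℝ) 1 :=
    ⟨hx.trans_le ht.1, ht.2.trans_lt hp⟩
  have h := le_of_hasDerivAt_nonneg hxp (fun t ht => (hasDerivAt_klApprox x (hmem ht)).sub
    (hasDerivAt_bernoulliKL_right x (hmem ht))) fun t ht => ?_
  · simp only [Pi.sub_apply, bernoulliKL_self, klApprox_self, sub_self] at h
    exact sub_nonneg.1 h
  · have hslope := one_le_klSlope ⟨hx, hxp.trans_lt hp⟩ (hmem ht)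
    exact sub_nonneg.2 (le_mul_of_one_le_right
      (div_nonneg (sub_nonneg.2 ht.1) (mul_one_sub_pos (hmem ht)).le) hslope)

theorem bernoulliKL_le_klApprox {x p : ℝ} (hx : x ∈ Ioo (0 : ℝ) 1) (hp : p ∈ Ioo (0 : ℝ) 1) :
    bernoulliKL x p ≤ klApprox x p := by
  rcases le_total x p with hxp | hpx
  · exact bernoulliKL_le_klApprox_of_le hx.1 hxp hp.2
  · rw [← bernoulliKL_one_sub, ← klApprox_one_sub]
    exact bernoulliKL_le_klApprox_of_le (one_sub_mem_Ioo hx).1 (by linarith) (one_sub_mem_Ioo hp).2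

theorem var_div_var_le_exp {x p : ℝ} (hx : x ∈ Ioo (0 : ℝ) 1) (hp : p ∈ Ioo (0 : ℝ) 1) :
    x * (1 - x) / (p * (1 - p)) ≤ exp (bernoulliKL x p / (x * (1 - x)) + 1) := by
  have hx0 := hx.1
  have hp0 := hp.1
  have hy0 := (one_sub_mem_Ioo hx).1
  have hq0 := (one_sub_mem_Ioo hp).1
  have hlogx : x ^ 2 * (log p - log x) ≤ x * p - x ^ 2 := by
    have := mul_le_mul_of_nonneg_left (log_le_sub_one_of_pos (div_pos hp0 hx0)) (sq_nonneg x)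
    rwa [log_div hp0.ne' hx0.ne', show x ^ 2 * (p / x - 1) = x * p - x ^ 2 by field_simp] at this
  have hlogy : (1 - x) ^ 2 * (log (1 - p) - log (1 - x)) ≤
      (1 - x) * (1 - p) - (1 - x) ^ 2 := by
    have := mul_le_mul_of_nonneg_left (log_le_sub_one_of_pos (div_pos hq0 hy0)) (sq_nonneg (1 - x))
    rwa [log_div hq0.ne' hy0.ne', show (1 - x) ^ 2 * ((1 - p) / (1 - x) - 1) =
      (1 - x) * (1 - p) - (1 - x) ^ 2 by field_simp] at this
  rw [← log_le_iff_le_exp (by positivity), log_div (by positivity) (by positivity),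
    log_mul hx0.ne' hy0.ne', log_mul hp0.ne' hq0.ne', ← sub_le_iff_le_add,
    le_div_iff₀ (by positivity), bernoulliKL]
  nlinarith [mul_pos hx0 hp0, mul_pos hy0 hq0]

theorem mul_varWeight_le_exp_one {x p : ℝ} (hx : x ∈ Ioo (0 : ℝ) 1) (hp : p ∈ Ioo (0 : ℝ) 1)
    (hL : bernoulliKL x p / (x * (1 - x)) ≤ 1 / 2) : x * (1 - x) * varWeight x p ≤ exp 1 := by
  have hv := mul_one_sub_pos hp
  have hv0 := mul_one_sub_pos hx
  calc x * (1 - x) * varWeight x p = (x * (1 - x) / (p * (1 - p))) ^ (2 / 3 : ℝ) :=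
        mul_varWeight hx hp
    _ ≤ exp (3 / 2) ^ (2 / 3 : ℝ) := by
        gcongr
        exact (var_div_var_le_exp hx hp).trans (exp_le_exp.2 (by linarith))
    _ = exp 1 := by rw [← exp_mul]; norm_num

-- The constant `0.605` is an upper bound for `2 / 9 * exp 1`.
theorem klSlope_le_of_le {x p : ℝ} (hx : 0 < x) (hxp : x ≤ p) (hp : p < 1)
    (hL : bernoulliKL x p / (x * (1 - x)) ≤ 1 / 2) :
    klSlope x p ≤ 1 + 0.605 * (bernoulliKL x p / (x * (1 - x))) := by
  have hxI : x ∈ Ioo (0 : ℝ) 1 := ⟨hx, hxp.trans_lt hp⟩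
  have hv0 := mul_one_sub_pos hxI
  have hmem {t : ℝ} (ht : t ∈ Icc x p) : t ∈ Ioo (0 : ℝ) 1 :=
    ⟨hx.trans_le ht.1, ht.2.trans_lt hp⟩
  have h := le_of_hasDerivAt_nonneg hxp (fun t ht =>
    (((hasDerivAt_bernoulliKL_right x (hmem ht)).div_const (x * (1 - x))).const_mul 0.605).sub
      (hasDerivAt_klSlope x (hmem ht))) fun t ht => ?_
  · simp only [Pi.sub_apply, bernoulliKL_self, klSlope_self hxI, zero_div, mul_zero] at h
    linarith
  · have hv := mul_one_sub_pos (hmem ht)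
    have hw := varWeight_pos hxI (hmem ht)
    have hKt : bernoulliKL x t / (x * (1 - x)) ≤ 1 / 2 :=
      hL.trans' (by gcongr; exact bernoulliKL_le_bernoulliKL hx ht.1 ht.2 hp)
    have hweight : 2 / 9 * (1 - t * (1 - t)) * varWeight x t ≤ 0.605 / (x * (1 - x)) := by
      rw [le_div_iff₀ hv0]
      nlinarith [mul_varWeight_le_exp_one hxI (hmem ht) hKt, exp_one_lt_d9,
        mul_pos hv (mul_pos hv0 hw)]
    have hd : 0 ≤ (t - x) / (t * (1 - t)) := div_nonneg (sub_nonneg.2 ht.1) hv.le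
    calc 0 ≤ (t - x) / (t * (1 - t)) *
          (0.605 / (x * (1 - x)) - 2 / 9 * (1 - t * (1 - t)) * varWeight x t) :=
            mul_nonneg hd (sub_nonneg.2 hweight)
      _ = _ := by ring

theorem klApprox_le_of_le {x p : ℝ} (hx : 0 < x) (hxp : x ≤ p) (hp : p < 1)
    (hL : bernoulliKL x p / (x * (1 - x)) ≤ 1 / 2) :
    klApprox x p ≤ bernoulliKL x p * (1 + 0.3025 * (bernoulliKL x p / (x * (1 - x)))) := by
  have hv0 := mul_one_sub_pos ⟨hx, hxp.trans_lt hp⟩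
  have hmem {t : ℝ} (ht : t ∈ Icc x p) : t ∈ Ioo (0 : ℝ) 1 :=
    ⟨hx.trans_le ht.1, ht.2.trans_lt hp⟩
  have h := le_of_hasDerivAt_nonneg hxp (fun t ht =>
    ((hasDerivAt_bernoulliKL_right x (hmem ht)).add
      (((hasDerivAt_bernoulliKL_right x (hmem ht)).pow 2).const_mul (0.3025 / (x * (1 - x))))).sub
        (hasDerivAt_klApprox x (hmem ht))) fun t ht => ?_
  · simp only [Pi.sub_apply, Pi.add_apply, Pi.pow_apply, bernoulliKL_self, klApprox_self] at h
    linear_combination h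
  · have hKt : bernoulliKL x t / (x * (1 - x)) ≤ 1 / 2 :=
      hL.trans' (by gcongr; exact bernoulliKL_le_bernoulliKL hx ht.1 ht.2 hp)
    have hslope := klSlope_le_of_le hx ht.1 (hmem ht).2 hKt
    have hd : 0 ≤ (t - x) / (t * (1 - t)) :=
      div_nonneg (sub_nonneg.2 ht.1) (mul_one_sub_pos (hmem ht)).le
    calc 0 ≤ (t - x) / (t * (1 - t)) *
          (1 + 0.605 * (bernoulliKL x t / (x * (1 - x))) - klSlope x t) :=
            mul_nonneg hd (sub_nonneg.2 hslope)
      _ = _ := by push_cast; ring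

theorem klApprox_le {x p : ℝ} (hx : x ∈ Ioo (0 : ℝ) 1) (hp : p ∈ Ioo (0 : ℝ) 1)
    (hL : bernoulliKL x p / (x * (1 - x)) ≤ 1 / 2) :
    klApprox x p ≤ bernoulliKL x p * (1 + 0.3025 * (bernoulliKL x p / (x * (1 - x)))) := by
  rcases le_total x p with hxp | hpx
  · exact klApprox_le_of_le hx.1 hxp hp.2 hL
  · have := klApprox_le_of_le (one_sub_mem_Ioo hx).1 (sub_le_sub_left hpx 1) (one_sub_mem_Ioo hp).2
    rw [bernoulliKL_one_sub, klApprox_one_sub, sub_sub_cancel, mul_comm (1 - x) x] at this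
    exact this hL

-- The cubic term makes the bound trivial as soon as the linear one exceeds its range `[0, 1/2]`.
theorem one_sub_sqrt_bernoulliKL_div_klApprox_le {x p : ℝ} (hx : x ∈ Ioo (0 : ℝ) 1)
    (hp : p ∈ Ioo (0 : ℝ) 1) (hpx : p ≠ x) :
    1 - √(bernoulliKL x p / klApprox x p) ≤ 0.15125 * (bernoulliKL x p / (x * (1 - x)))
      + 8 * (bernoulliKL x p / (x * (1 - x))) ^ 3 := by
  have hK := bernoulliKL_nonneg hx hp
  have hL0 : 0 ≤ bernoulliKL x p / (x * (1 - x)) := div_nonneg hK (mul_one_sub_pos hx).le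
  rcases le_or_gt (bernoulliKL x p / (x * (1 - x))) (1 / 2) with hL | hL
  · have hT := klApprox_le hx hp hL
    generalize bernoulliKL x p / (x * (1 - x)) = L at hL0 hL hT ⊢
    suffices 1 - 0.15125 * L ≤ √(bernoulliKL x p / klApprox x p) by
      linarith [pow_nonneg hL0 3]
    refine le_sqrt_of_sq_le ((le_div_iff₀ (klApprox_pos hx hp hpx)).2 ?_)
    calc (1 - 0.15125 * L) ^ 2 * klApprox x p
        ≤ (1 - 0.15125 * L) ^ 2 * (bernoulliKL x p * (1 + 0.3025 * L)) := by gcongr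
      _ = bernoulliKL x p * ((1 - 0.15125 * L) ^ 2 * (1 + 0.3025 * L)) := by ring
      _ ≤ bernoulliKL x p := mul_le_of_le_one_right hK (by nlinarith [mul_nonneg hL0 hL0])
  · have : (1 / 2) ^ 3 ≤ (bernoulliKL x p / (x * (1 - x))) ^ 3 := by gcongr
    linarith [sqrt_nonneg (bernoulliKL x p / klApprox x p)]

/-! ### The signed deviance -/

/-- The signed square root of twice the relative entropy between Bernoulli laws, for `N`
observations. For fixed `x` it increases with `p`, from `-∞` at `0` to `∞` at `1`. -/
noncomputable def signedDeviance (N x p : ℝ) : ℝ :=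
  if p < x then -√(2 * N * bernoulliKL x p) else √(2 * N * bernoulliKL x p)

theorem signedDeviance_of_le {N x p : ℝ} (h : x ≤ p) :
    signedDeviance N x p = √(2 * N * bernoulliKL x p) := if_neg h.not_gt

theorem signedDeviance_of_lt {N x p : ℝ} (h : p < x) :
    signedDeviance N x p = -√(2 * N * bernoulliKL x p) := if_pos h

theorem abs_signedDeviance (N x p : ℝ) : |signedDeviance N x p| = √(2 * N * bernoulliKL x p) := by
  rcases lt_or_ge p x with h | h
  · rw [signedDeviance_of_lt h, abs_neg, abs_of_nonneg (sqrt_nonneg _)]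
  · rw [signedDeviance_of_le h, abs_of_nonneg (sqrt_nonneg _)]

theorem signedDeviance_sq {N x p : ℝ} (hN : 0 ≤ N) (hx : x ∈ Ioo (0 : ℝ) 1)
    (hp : p ∈ Ioo (0 : ℝ) 1) : signedDeviance N x p ^ 2 = 2 * N * bernoulliKL x p := by
  have := bernoulliKL_nonneg hx hp
  rw [← sq_abs, abs_signedDeviance, sq_sqrt (by positivity)]

theorem hasDerivAt_signedDeviance {N x p : ℝ} (hN : 0 < N) (hx : x ∈ Ioo (0 : ℝ) 1)
    (hp : p ∈ Ioo (0 : ℝ) 1) (hpx : p ≠ x) :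
    HasDerivAt (signedDeviance N x)
      (N * |p - x| / (p * (1 - p) * √(2 * N * bernoulliKL x p))) p := by
  have hK := bernoulliKL_pos hx hp hpx
  have hroot := ((hasDerivAt_bernoulliKL_right x hp).const_mul (2 * N)).sqrt (by positivity)
  rcases hpx.lt_or_gt with h | h
  · have heq : signedDeviance N x =ᶠ[𝓝 p] fun t => -√(2 * N * bernoulliKL x t) := by
      filter_upwards [eventually_lt_nhds h] with t ht using signedDeviance_of_lt ht
    refine (hroot.neg.congr_of_eventuallyEq heq).congr_deriv ?_
    rw [abs_of_neg (sub_neg.2 h)]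
    field_simp
  · have heq : signedDeviance N x =ᶠ[𝓝 p] fun t => √(2 * N * bernoulliKL x t) := by
      filter_upwards [eventually_gt_nhds h] with t ht using signedDeviance_of_le ht.le
    refine (hroot.congr_of_eventuallyEq heq).congr_deriv ?_
    rw [abs_of_pos (sub_pos.2 h)]
    field_simp

theorem continuousOn_signedDeviance {N x : ℝ} (hN : 0 < N) (hx : x ∈ Ioo (0 : ℝ) 1) :
    ContinuousOn (signedDeviance N x) (Ioo 0 1) := by
  intro p hp
  refine ContinuousAt.continuousWithinAt ?_
  rcases eq_or_ne p x with rfl | hpx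
  · have hlim : Tendsto (fun t => √(2 * N * bernoulliKL p t)) (𝓝 p)
        (𝓝 √(2 * N * bernoulliKL p p)) :=
      ((hasDerivAt_bernoulliKL_right p hp).continuousAt.const_mul (2 * N)).sqrt
    rw [ContinuousAt, signedDeviance_of_le le_rfl]
    rw [bernoulliKL_self, mul_zero, sqrt_zero] at hlim ⊢
    exact (tendsto_zero_iff_abs_tendsto_zero _).2
      (hlim.congr fun t => (abs_signedDeviance N p t).symm)
  · exact (hasDerivAt_signedDeviance hN hx hp hpx).continuousAt

theorem tendsto_signedDeviance_nhdsGT_zero {N x : ℝ} (hN : 0 < N) (hx : 0 < x) :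
    Tendsto (signedDeviance N x) (𝓝[>] 0) atBot := by
  have h := tendsto_neg_atTop_atBot.comp (tendsto_sqrt_atTop.comp
    ((tendsto_bernoulliKL_nhdsGT_zero hx).const_mul_atTop (mul_pos two_pos hN)))
  refine h.congr' ?_
  filter_upwards [nhdsWithin_le_nhds (eventually_lt_nhds hx)] with p hp
  exact (signedDeviance_of_lt hp).symm

theorem tendsto_signedDeviance_nhdsLT_one {N x : ℝ} (hN : 0 < N) (hx : x < 1) :
    Tendsto (signedDeviance N x) (𝓝[<] 1) atTop := by
  have hreflect : Tendsto (fun p : ℝ => 1 - p) (𝓝[<] 1) (𝓝[>] 0) := by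
    have hcont : ContinuousWithinAt (fun p : ℝ => 1 - p) (Iio 1) 1 := by fun_prop
    simpa only [sub_self] using hcont.tendsto_nhdsWithin fun p hp => mem_Ioi.2 (sub_pos.2 hp)
  have h := tendsto_sqrt_atTop.comp (((tendsto_bernoulliKL_nhdsGT_zero (sub_pos.2 hx)).comp
    hreflect).const_mul_atTop (mul_pos two_pos hN))
  refine h.congr' ?_
  filter_upwards [nhdsWithin_le_nhds (eventually_gt_nhds hx)] with p hp
  simp only [Function.comp_apply, bernoulliKL_one_sub]
  exact (signedDeviance_of_le hp.le).symm

/-! ### Lower tails of binomial laws -/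

/-- The probability of at most `k` successes in `n` trials with success probability `p`. -/
noncomputable def binomLower (n k : ℕ) (p : ℝ) : ℝ :=
  ∑ i ∈ Finset.range (k + 1), (bernsteinPolynomial ℝ n i).eval p

/-- For `k < n`, the density of the beta law with parameters `k + 1` and `n - k`. -/
noncomputable def betaDensity (n k : ℕ) (p : ℝ) : ℝ :=
  n * (bernsteinPolynomial ℝ (n - 1) k).eval p

theorem eval_bernsteinPolynomial (n i : ℕ) (p : ℝ) :
    (bernsteinPolynomial ℝ n i).eval p = n.choose i * p ^ i * (1 - p) ^ (n - i) := by
  simp [bernsteinPolynomial]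

theorem eval_bernsteinPolynomial_nonneg (n i : ℕ) {p : ℝ} (hp : p ∈ Icc (0 : ℝ) 1) :
    0 ≤ (bernsteinPolynomial ℝ n i).eval p := by
  have := hp.1
  have := sub_nonneg.2 hp.2
  rw [eval_bernsteinPolynomial]
  positivity

theorem hasDerivAt_binomLower (n k : ℕ) (p : ℝ) :
    HasDerivAt (binomLower n k) (-betaDensity n k p) p := by
  induction k with
  | zero =>
    have hfun : binomLower n 0 = fun p => (bernsteinPolynomial ℝ n 0).eval p := by
      funext t
      simp [binomLower]
    rw [hfun]
    refine ((bernsteinPolynomial ℝ n 0).hasDerivAt p).congr_deriv ?_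
    simp [bernsteinPolynomial.derivative_zero, betaDensity]
  | succ k ih =>
    have hfun : binomLower n (k + 1) =
        fun p => binomLower n k p + (bernsteinPolynomial ℝ n (k + 1)).eval p :=
      funext fun t => Finset.sum_range_succ _ _
    rw [hfun]
    refine (ih.add ((bernsteinPolynomial ℝ n (k + 1)).hasDerivAt p)).congr_deriv ?_
    rw [bernsteinPolynomial.derivative_succ]
    simp [betaDensity]
    ring

theorem continuous_binomLower (n k : ℕ) : Continuous (binomLower n k) :=
  continuous_iff_continuousAt.2 fun p => (hasDerivAt_binomLower n k p).continuousAt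

theorem binomLower_at_zero (n k : ℕ) : binomLower n k 0 = 1 := by
  simp [binomLower, bernsteinPolynomial.eval_at_0]

theorem binomLower_at_one {n k : ℕ} (hkn : k < n) : binomLower n k 1 = 0 := by
  refine Finset.sum_eq_zero fun i hi => ?_
  rw [bernsteinPolynomial.eval_at_1, if_neg]
  have := Finset.mem_range.1 hi
  omega

theorem binomLower_self (n : ℕ) (p : ℝ) : binomLower n n p = 1 := by
  rw [binomLower, ← Polynomial.eval_finsetSum, bernsteinPolynomial.sum, Polynomial.eval_one]

theorem binomLower_mono (n : ℕ) {p : ℝ} (hp : p ∈ Icc (0 : ℝ) 1) :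
    Monotone fun k => binomLower n k p := fun _ _ hkl =>
  Finset.sum_le_sum_of_subset_of_nonneg (Finset.range_mono (Nat.succ_le_succ hkl))
    fun i _ _ => eval_bernsteinPolynomial_nonneg n i hp

/-! ### Comparison of the beta law with a transformed normal law -/

/-- The classical approximation `(a - 1/3) / (a + b - 2/3)` of the median of the beta law with
parameters `a = k + 1` and `b = n - k`. -/
noncomputable def betaMedian (n k : ℕ) : ℝ := (k + 2 / 3) / (n + 1 / 3)

theorem mul_betaMedian (n k : ℕ) : (n + 1 / 3) * betaMedian n k = k + 2 / 3 := by
  rw [betaMedian]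
  field_simp

theorem betaMedian_mem_Ioo {n k : ℕ} (hkn : k < n) : betaMedian n k ∈ Ioo (0 : ℝ) 1 := by
  have : (k + 1 : ℝ) ≤ n := by exact_mod_cast hkn
  refine ⟨by unfold betaMedian; positivity, (div_lt_one (by positivity)).2 (by linarith)⟩

/-- The derivative of `Phi` composed with the signed deviance: the density which the signed
deviance pulls back from the normal law. -/
noncomputable def devianceDensity (N x p : ℝ) : ℝ :=
  φ (signedDeviance N x p) * (N * |p - x| / (p * (1 - p) * √(2 * N * bernoulliKL x p)))

theorem devianceDensity_pos {N x p : ℝ} (hN : 0 < N) (hx : x ∈ Ioo (0 : ℝ) 1)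
    (hp : p ∈ Ioo (0 : ℝ) 1) (hpx : p ≠ x) : 0 < devianceDensity N x p := by
  have := bernoulliKL_pos hx hp hpx
  have := phi_pos (signedDeviance N x p)
  have := mul_one_sub_pos hp
  unfold devianceDensity
  positivity

theorem hasDerivAt_Phi_signedDeviance {N x p : ℝ} (hN : 0 < N) (hx : x ∈ Ioo (0 : ℝ) 1)
    (hp : p ∈ Ioo (0 : ℝ) 1) (hpx : p ≠ x) :
    HasDerivAt (fun p => Phi (signedDeviance N x p)) (devianceDensity N x p) p :=
  (hasDerivAt_Phi _).comp p (hasDerivAt_signedDeviance hN hx hp hpx)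

theorem phi_signedDeviance {N x p : ℝ} (hN : 0 ≤ N) (hx : x ∈ Ioo (0 : ℝ) 1)
    (hp : p ∈ Ioo (0 : ℝ) 1) :
    φ (signedDeviance N x p) = φ 0 * exp (-(N * bernoulliKL x p)) := by
  rw [phi_apply, phi_zero, neg_div, signedDeviance_sq hN hx hp]
  ring_nf

theorem devianceDensity_mul_sqrt {N x p : ℝ} (hN : 0 < N) (hx : x ∈ Ioo (0 : ℝ) 1)
    (hp : p ∈ Ioo (0 : ℝ) 1) (hpx : p ≠ x) :
    devianceDensity N x p * √(bernoulliKL x p / klApprox x p) =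
      √N * (φ (signedDeviance N x p) / (p * (1 - p) * √(varWeight x p))) := by
  have hK := bernoulliKL_pos hx hp hpx
  have hw := varWeight_pos hx hp
  have hv := mul_one_sub_pos hp
  have hT : √(klApprox x p) = |p - x| / √2 * √(varWeight x p) := by
    rw [klApprox, sqrt_mul (by positivity), sqrt_div (sq_nonneg _), sqrt_sq_eq_abs]
  have hroot : √(2 * N * bernoulliKL x p) = √2 * √N * √(bernoulliKL x p) := by
    rw [sqrt_mul (by positivity), sqrt_mul zero_le_two]
  have hNsqrt := mul_self_sqrt hN.le
  rw [devianceDensity, sqrt_div hK.le, hT, hroot]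
  generalize φ (signedDeviance N x p) = y
  generalize p * (1 - p) = v at hv
  field_simp
  linear_combination -y * hNsqrt

theorem pow_mul_pow_eq_exp_mul {k m : ℕ} {N x p : ℝ} (hk : N * x = k + 2 / 3)
    (hm : N * (1 - x) = m + 2 / 3) (hp : p ∈ Ioo (0 : ℝ) 1) :
    p ^ k * (1 - p) ^ m = exp (N * (x * log x + (1 - x) * log (1 - x))) *
      (exp (-(N * bernoulliKL x p)) * (p * (1 - p)) ^ (-(2 / 3) : ℝ)) := by
  have hp0 := hp.1
  have hq0 := (one_sub_mem_Ioo hp).1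
  rw [← rpow_natCast, ← rpow_natCast, rpow_def_of_pos hp0, rpow_def_of_pos hq0,
    rpow_def_of_pos (mul_pos hp0 hq0), log_mul hp0.ne' hq0.ne', ← exp_add, ← exp_add, ← exp_add,
    bernoulliKL]
  congr 1
  linear_combination (-log p) * hk - log (1 - p) * hm

theorem rpow_eq_div_mul_sqrt_varWeight {x p : ℝ} (hx : x ∈ Ioo (0 : ℝ) 1)
    (hp : p ∈ Ioo (0 : ℝ) 1) : (p * (1 - p)) ^ (-(2 / 3) : ℝ) =
      (x * (1 - x)) ^ (-(1 / 6) : ℝ) / (p * (1 - p) * √(varWeight x p)) := by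
  have hv := mul_one_sub_pos hp
  have hv0 := mul_one_sub_pos hx
  have hw := varWeight_pos hx hp
  rw [eq_div_iff (by positivity), varWeight]
  generalize p * (1 - p) = v at hv ⊢
  generalize x * (1 - x) = v₀ at hv0 ⊢
  rw [sqrt_eq_rpow, mul_rpow (by positivity) (by positivity), ← rpow_mul hv.le, ← rpow_mul hv0.le,
    ← mul_assoc, ← mul_assoc]
  nth_rw 2 [← rpow_one v]
  rw [← rpow_add hv, ← rpow_add hv]
  norm_num

theorem exists_betaDensity_eq_mul {n k : ℕ} (hkn : k < n) :
    ∃ C > 0, ∀ p ∈ Ioo (0 : ℝ) 1, p ≠ betaMedian n k →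
      betaDensity n k p = C * (devianceDensity (n + 1 / 3) (betaMedian n k) p *
        √(bernoulliKL (betaMedian n k) p / klApprox (betaMedian n k) p)) := by
  have hx := betaMedian_mem_Ioo hkn
  have hk := mul_betaMedian n k
  have hm : (n + 1 / 3) * (1 - betaMedian n k) = (n - 1 - k : ℕ) + 2 / 3 := by
    rw [mul_one_sub, hk, Nat.cast_sub (by omega), Nat.cast_pred (by omega)]
    ring
  generalize betaMedian n k = x at hx hk hm ⊢
  have hN : (0 : ℝ) < n + 1 / 3 := by positivity
  have hn : (0 : ℝ) < n := by exact_mod_cast k.zero_le.trans_lt hkn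
  have hchoose : (0 : ℝ) < (n - 1).choose k := by exact_mod_cast Nat.choose_pos (by omega)
  have hφ := phi_pos 0
  have hv0 := rpow_pos_of_pos (mul_one_sub_pos hx) (-(1 / 6))
  refine ⟨n * (n - 1).choose k * exp ((n + 1 / 3) * (x * log x + (1 - x) * log (1 - x))) *
    (x * (1 - x)) ^ (-(1 / 6) : ℝ) / (φ 0 * √(n + 1 / 3)), by positivity, fun p hp hpx => ?_⟩
  rw [devianceDensity_mul_sqrt hN hx hp hpx, phi_signedDeviance hN.le hx hp, betaDensity,
    eval_bernsteinPolynomial, mul_assoc _ (p ^ k), pow_mul_pow_eq_exp_mul hk hm hp,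
    rpow_eq_div_mul_sqrt_varWeight hx hp]
  field_simp

-- Both densities have mass `1`.
theorem one_le_of_betaDensity_le_mul {n k : ℕ} (hkn : k < n) {N x C : ℝ} (hN : 0 < N)
    (hx : x ∈ Ioo (0 : ℝ) 1) (hC : ∀ p ∈ Ioo (0 : ℝ) 1, p ≠ x →
      betaDensity n k p ≤ C * devianceDensity N x p) : 1 ≤ C := by
  set E : ℝ → ℝ := fun p => 1 - binomLower n k p - C * Phi (signedDeviance N x p)
  have hanti : AntitoneOn E (Ioo 0 1) := by
    refine antitoneOn_Ioo_of_hasDerivAt_nonpos hx ?_ (fun p hp hpx =>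
      ((hasDerivAt_binomLower n k p).const_sub 1).sub
        ((hasDerivAt_Phi_signedDeviance hN hx hp hpx).const_mul C)) fun p hp hpx => ?_
    · exact (continuous_const.sub (continuous_binomLower n k)).continuousOn.sub
        (continuousOn_const.mul
          (continuous_Phi.comp_continuousOn (continuousOn_signedDeviance hN hx)))
    · rw [neg_neg]
      exact sub_nonpos.2 (hC p hp hpx)
  have hlim0 : Tendsto E (𝓝[>] 0) (𝓝 (1 - binomLower n k 0 - C * 0)) :=
    (((continuous_binomLower n k).tendsto 0).mono_left nhdsWithin_le_nhds).const_sub 1 |>.sub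
      ((tendsto_Phi_atBot.comp (tendsto_signedDeviance_nhdsGT_zero hN hx.1)).const_mul C)
  have hlim1 : Tendsto E (𝓝[<] 1) (𝓝 (1 - binomLower n k 1 - C * 1)) :=
    (((continuous_binomLower n k).tendsto 1).mono_left nhdsWithin_le_nhds).const_sub 1 |>.sub
      ((tendsto_Phi_atTop.comp (tendsto_signedDeviance_nhdsLT_one hN hx.2)).const_mul C)
  have := (ge_of_antitoneOn_Ioo_of_tendsto_nhdsLT hanti hlim1 hx).trans
    (le_of_antitoneOn_Ioo_of_tendsto_nhdsGT hanti hlim0 hx)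
  rw [binomLower_at_zero, binomLower_at_one hkn] at this
  linarith

theorem devianceDensity_mul_sqrt_le_betaDensity {n k : ℕ} (hkn : k < n) {p : ℝ}
    (hp : p ∈ Ioo (0 : ℝ) 1) (hpx : p ≠ betaMedian n k) :
    devianceDensity (n + 1 / 3) (betaMedian n k) p *
      √(bernoulliKL (betaMedian n k) p / klApprox (betaMedian n k) p) ≤ betaDensity n k p := by
  have hx := betaMedian_mem_Ioo hkn
  have hN : (0 : ℝ) < n + 1 / 3 := by positivity
  obtain ⟨C, hC0, hC⟩ := exists_betaDensity_eq_mul hkn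
  have hC1 : 1 ≤ C := by
    refine one_le_of_betaDensity_le_mul hkn hN hx fun p hp hpx => ?_
    rw [hC p hp hpx]
    exact mul_le_mul_of_nonneg_left (mul_le_of_le_one_right (devianceDensity_pos hN hx hp hpx).le
      (sqrt_le_one.2 ((div_le_one (klApprox_pos hx hp hpx)).2
        (bernoulliKL_le_klApprox hx hp)))) hC0.le
  rw [hC p hp hpx]
  exact le_mul_of_one_le_left
    (mul_nonneg (devianceDensity_pos hN hx hp hpx).le (sqrt_nonneg _)) hC1

/-- The primitive of `w ↦ (α * w ^ 2 + β * w ^ 6) * φ w` vanishing at `-∞`, used to integrate the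
error in the density ratio. -/
noncomputable def momentPrimitive (α β w : ℝ) : ℝ :=
  α * (Phi w - w * φ w) + β * (15 * Phi w - (w ^ 5 + 5 * w ^ 3 + 15 * w) * φ w)

theorem hasDerivAt_momentPrimitive (α β w : ℝ) :
    HasDerivAt (momentPrimitive α β) ((α * w ^ 2 + β * w ^ 6) * φ w) w := by
  have hP := hasDerivAt_Phi w
  have hφ := hasDerivAt_phi w
  have hpoly : HasDerivAt (fun w : ℝ => w ^ 5 + 5 * w ^ 3 + 15 * w)
      (5 * w ^ 4 + 15 * w ^ 2 + 15) w := by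
    refine (((hasDerivAt_pow 5 w).add ((hasDerivAt_pow 3 w).const_mul 5)).add
      ((hasDerivAt_id w).const_mul 15)).congr_deriv ?_
    push_cast
    ring
  refine (((hP.sub ((hasDerivAt_id w).mul hφ)).const_mul α).add
    (((hP.const_mul 15).sub (hpoly.mul hφ)).const_mul β)).congr_deriv ?_
  simp only [id]
  ring

theorem tendsto_momentPrimitive {l : Filter ℝ} {c : ℝ} (hl : l ≤ cocompact ℝ)
    (hP : Tendsto Phi l (𝓝 c)) (α β : ℝ) :
    Tendsto (momentPrimitive α β) l (𝓝 ((α + 15 * β) * c)) := by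
  have h1 := (tendsto_pow_mul_phi 1).mono_left hl
  have h3 := (tendsto_pow_mul_phi 3).mono_left hl
  have h5 := (tendsto_pow_mul_phi 5).mono_left hl
  have h := ((hP.sub h1).const_mul α).add
    (((hP.const_mul 15).sub ((h5.add (h3.const_mul 5)).add (h1.const_mul 15))).const_mul β)
  convert h using 2
  · unfold momentPrimitive
    ring
  · ring

theorem momentPrimitive_le {α β : ℝ} (hα : 0 ≤ α) (hβ : 0 ≤ β) (w : ℝ) :
    momentPrimitive α β w ≤ α + 15 * β := by
  have h := tendsto_momentPrimitive atTop_le_cocompact tendsto_Phi_atTop α β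
  rw [mul_one] at h
  refine ge_of_tendsto h ?_
  filter_upwards [eventually_ge_atTop w] with y hy
  refine le_of_hasDerivAt_nonneg hy (fun t _ => hasDerivAt_momentPrimitive α β t) fun t _ => ?_
  have := phi_pos t
  positivity

theorem devianceDensity_sub_betaDensity_le {n k : ℕ} (hkn : k < n) {p : ℝ}
    (hp : p ∈ Ioo (0 : ℝ) 1) (hpx : p ≠ betaMedian n k) :
    devianceDensity (n + 1 / 3) (betaMedian n k) p - betaDensity n k p ≤
      devianceDensity (n + 1 / 3) (betaMedian n k) p *
        (0.15125 * (bernoulliKL (betaMedian n k) p / (betaMedian n k * (1 - betaMedian n k))) +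
          8 * (bernoulliKL (betaMedian n k) p /
            (betaMedian n k * (1 - betaMedian n k))) ^ 3) := by
  have hx := betaMedian_mem_Ioo hkn
  have hratio := mul_le_mul_of_nonneg_left
    (one_sub_sqrt_bernoulliKL_div_klApprox_le hx hp hpx)
    (devianceDensity_pos (by positivity : (0 : ℝ) < n + 1 / 3) hx hp hpx).le
  linarith [devianceDensity_mul_sqrt_le_betaDensity hkn hp hpx]

-- Since `signedDeviance ^ 2 = 2 * N * bernoulliKL`, the coefficients are halved and divided by `8`.
theorem moment_signedDeviance {N x p : ℝ} (hN : 0 < N) (hx : x ∈ Ioo (0 : ℝ) 1)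
    (hp : p ∈ Ioo (0 : ℝ) 1) :
    0.075625 / (N * (x * (1 - x))) * signedDeviance N x p ^ 2 +
        1 / (N * (x * (1 - x))) ^ 3 * signedDeviance N x p ^ 6 =
      0.15125 * (bernoulliKL x p / (x * (1 - x))) + 8 * (bernoulliKL x p / (x * (1 - x))) ^ 3 := by
  have hsixth : signedDeviance N x p ^ 6 = (signedDeviance N x p ^ 2) ^ 3 := by ring
  rw [hsixth, signedDeviance_sq hN.le hx hp]
  field_simp
  ring

theorem binomLower_le_Phi_neg_signedDeviance {n k : ℕ} (hkn : k < n) {p : ℝ}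
    (hp : p ∈ Ioo (0 : ℝ) 1) :
    binomLower n k p ≤ Phi (-signedDeviance (n + 1 / 3) (betaMedian n k) p) +
      (0.075625 / ((n + 1 / 3) * (betaMedian n k * (1 - betaMedian n k))) +
        15 / ((n + 1 / 3) * (betaMedian n k * (1 - betaMedian n k))) ^ 3) := by
  have hx := betaMedian_mem_Ioo hkn
  have hdensity {p : ℝ} := devianceDensity_sub_betaDensity_le hkn (p := p)
  have hN : (0 : ℝ) < n + 1 / 3 := by positivity
  generalize betaMedian n k = x at hx hdensity ⊢
  generalize (n + 1 / 3 : ℝ) = N at hN hdensity ⊢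
  have hs : 0 < N * (x * (1 - x)) := mul_pos hN (mul_one_sub_pos hx)
  have hmoment {p : ℝ} := moment_signedDeviance (p := p) hN hx
  set α := 0.075625 / (N * (x * (1 - x)))
  set β := 1 / (N * (x * (1 - x))) ^ 3
  have hW := continuousOn_signedDeviance hN hx
  have hW0 := tendsto_signedDeviance_nhdsGT_zero hN hx.1
  have hM : Continuous (momentPrimitive α β) :=
    continuous_iff_continuousAt.2 fun p => (hasDerivAt_momentPrimitive α β p).continuousAt
  set D : ℝ → ℝ := fun p => binomLower n k p + Phi (signedDeviance N x p)
    - momentPrimitive α β (signedDeviance N x p)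
  have hanti : AntitoneOn D (Ioo 0 1) := by
    refine antitoneOn_Ioo_of_hasDerivAt_nonpos hx (((continuous_binomLower n k).continuousOn.add
      (continuous_Phi.comp_continuousOn hW)).sub (hM.comp_continuousOn hW)) (fun p hp hpx =>
        ((hasDerivAt_binomLower n k p).add (hasDerivAt_Phi_signedDeviance hN hx hp hpx)).sub
          ((hasDerivAt_momentPrimitive α β _).comp p (hasDerivAt_signedDeviance hN hx hp hpx)))
      fun p hp hpx => ?_
    rw [hmoment hp, mul_assoc, ← devianceDensity]
    linarith [hdensity hp hpx]
  have hlim : Tendsto D (𝓝[>] 0) (𝓝 (binomLower n k 0 + 0 - (α + 15 * β) * 0)) :=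
    (((continuous_binomLower n k).tendsto 0).mono_left nhdsWithin_le_nhds).add
      (tendsto_Phi_atBot.comp hW0) |>.sub
        ((tendsto_momentPrimitive atBot_le_cocompact tendsto_Phi_atBot α β).comp hW0)
  have hle := le_of_antitoneOn_Ioo_of_tendsto_nhdsGT hanti hlim hp
  have hMp := momentPrimitive_le (α := α) (β := β) (by positivity) (by positivity)
    (signedDeviance N x p)
  rw [binomLower_at_zero] at hle
  rw [Phi_neg, ← mul_one_div 15]
  linarith

/-! ### Taylor bounds for the relative entropy -/

theorem nonneg_of_second_hasDerivAt_nonneg {f f' f'' : ℝ → ℝ} {a b : ℝ} (hab : a ≤ b)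
    (hf : ∀ t ∈ Icc a b, HasDerivAt f (f' t) t) (hf' : ∀ t ∈ Icc a b, HasDerivAt f' (f'' t) t)
    (hfa : f a = 0) (hfa' : f' a = 0) (hf'' : ∀ t ∈ Icc a b, 0 ≤ f'' t) : 0 ≤ f b := by
  have hnonneg (t : ℝ) (ht : t ∈ Icc a b) : 0 ≤ f' t := by
    have hsub : Icc a t ⊆ Icc a b := Icc_subset_Icc_right ht.2
    exact hfa'.ge.trans (le_of_hasDerivAt_nonneg ht.1 (fun s hs => hf' s (hsub hs))
      fun s hs => hf'' s (hsub hs))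
  exact hfa.ge.trans (le_of_hasDerivAt_nonneg hab hf hnonneg)

theorem hasDerivAt_logit_sub_logit (p : ℝ) {x : ℝ} (hx : x ∈ Ioo (0 : ℝ) 1) :
    HasDerivAt (fun x => log x - log p - (log (1 - x) - log (1 - p))) (1 / (x * (1 - x))) x := by
  have hx0 := hx.1
  have hy0 := (one_sub_mem_Ioo hx).1
  refine (((hasDerivAt_log hx0.ne').sub_const _).sub
    ((((hasDerivAt_id x).const_sub 1).log hy0.ne').sub_const _)).congr_deriv ?_
  simp only [id]
  field_simp
  ring

theorem hasDerivAt_quartic_sub (a b c p x : ℝ) :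
    HasDerivAt (fun x => a * (x - p) ^ 2 / 2 + b * (x - p) ^ 3 / 6 + c * (x - p) ^ 4 / 12)
      (a * (x - p) + b * (x - p) ^ 2 / 2 + c * (x - p) ^ 3 / 3) x := by
  have h := (hasDerivAt_id x).sub_const p
  refine (((((h.pow 2).const_mul a).div_const 2).add (((h.pow 3).const_mul b).div_const 6)).add
    (((h.pow 4).const_mul c).div_const 12)).congr_deriv ?_
  simp only [id]
  push_cast
  ring

theorem hasDerivAt_cubic_sub (a b c p x : ℝ) :
    HasDerivAt (fun x => a * (x - p) + b * (x - p) ^ 2 / 2 + c * (x - p) ^ 3 / 3)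
      (a + b * (x - p) + c * (x - p) ^ 2) x := by
  have h := (hasDerivAt_id x).sub_const p
  refine (((h.const_mul a).add (((h.pow 2).const_mul b).div_const 2)).add
    (((h.pow 3).const_mul c).div_const 3)).congr_deriv ?_
  simp only [id]
  push_cast
  ring

theorem bernoulliKL_le_of_inv_le {a b c p x : ℝ} (hp : 0 < p) (hpx : p ≤ x) (hx : x < 1)
    (h : ∀ t ∈ Icc p x, 1 / (t * (1 - t)) ≤ a + b * (t - p) + c * (t - p) ^ 2) :
    bernoulliKL x p ≤ a * (x - p) ^ 2 / 2 + b * (x - p) ^ 3 / 6 + c * (x - p) ^ 4 / 12 := by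
  have hmem (t : ℝ) (ht : t ∈ Icc p x) : t ∈ Ioo (0 : ℝ) 1 := ⟨hp.trans_le ht.1, ht.2.trans_lt hx⟩
  have hsub := nonneg_of_second_hasDerivAt_nonneg hpx
    (fun t ht => (hasDerivAt_quartic_sub a b c p t).sub
      (hasDerivAt_bernoulliKL_left p (hmem t ht)))
    (fun t ht => (hasDerivAt_cubic_sub a b c p t).sub (hasDerivAt_logit_sub_logit p (hmem t ht)))
    (by simp [bernoulliKL_self]) (by simp) fun t ht => sub_nonneg.2 (h t ht)
  exact sub_nonneg.1 hsub

theorem le_bernoulliKL_of_le_inv {a b c p x : ℝ} (hp : 0 < p) (hpx : p ≤ x) (hx : x < 1)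
    (h : ∀ t ∈ Icc p x, a + b * (t - p) + c * (t - p) ^ 2 ≤ 1 / (t * (1 - t))) :
    a * (x - p) ^ 2 / 2 + b * (x - p) ^ 3 / 6 + c * (x - p) ^ 4 / 12 ≤ bernoulliKL x p := by
  have hmem (t : ℝ) (ht : t ∈ Icc p x) : t ∈ Ioo (0 : ℝ) 1 := ⟨hp.trans_le ht.1, ht.2.trans_lt hx⟩
  have hsub := nonneg_of_second_hasDerivAt_nonneg hpx
    (fun t ht => (hasDerivAt_bernoulliKL_left p (hmem t ht)).sub
      (hasDerivAt_quartic_sub a b c p t))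
    (fun t ht => (hasDerivAt_logit_sub_logit p (hmem t ht)).sub (hasDerivAt_cubic_sub a b c p t))
    (by simp [bernoulliKL_self]) (by simp) fun t ht => sub_nonneg.2 (h t ht)
  exact sub_nonneg.1 hsub

-- `1 / (1 - ε) ≤ 1 + 1.52 * ε` for `0 ≤ ε ≤ 0.34`.
theorem inv_var_le {p t h : ℝ} (hp : p ∈ Ioo (0 : ℝ) 1) (hpt : p ≤ t) (hh : 0 ≤ h)
    (hph : 2 * p - 1 ≤ h) (hhv : h + 0.34 * (p * (1 - p)) ≤ 1)
    (ht : t - p ≤ 0.34 * (p * (1 - p))) :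
    1 / (t * (1 - t)) ≤ 1 / (p * (1 - p)) + 1.52 * h / (p * (1 - p)) ^ 2 * (t - p) +
      1.52 / (p * (1 - p)) ^ 2 * (t - p) ^ 2 := by
  have hv := mul_one_sub_pos hp
  set ε := h * (t - p) + (t - p) ^ 2 with hε
  have hvt : p * (1 - p) - ε ≤ t * (1 - t) := by nlinarith
  have hε0 : 0 ≤ ε := by positivity
  have hεv : ε ≤ 0.34 * (p * (1 - p)) := by nlinarith
  set v := p * (1 - p)
  have hpos : 0 < v - ε := by linarith
  calc 1 / (t * (1 - t)) ≤ 1 / (v - ε) := one_div_le_one_div_of_le hpos hvt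
    _ ≤ (v + 1.52 * ε) / v ^ 2 := by
        rw [div_le_div_iff₀ hpos (by positivity)]
        nlinarith [mul_nonneg hε0 (sub_nonneg.2 hεv)]
    _ = _ := by
        rw [hε]
        field_simp
        ring

theorem two_mul_bernoulliKL_le {p x : ℝ} (hp : p ∈ Ioo (0 : ℝ) 1) (hpx : p ≤ x)
    (hx : x - p ≤ 0.34 * (p * (1 - p))) :
    2 * bernoulliKL x p ≤ (x - p) ^ 2 / (p * (1 - p)) *
      (1 + 1.52 * (max 0 (2 * p - 1) * (x - p) / (3 * (p * (1 - p))) +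
        (x - p) ^ 2 / (6 * (p * (1 - p))))) := by
  have hp0 := hp.1
  have hq0 := (one_sub_mem_Ioo hp).1
  have hx1 : x < 1 := by nlinarith
  have hv := mul_one_sub_pos hp
  have hhv : max 0 (2 * p - 1) + 0.34 * (p * (1 - p)) ≤ 1 := by
    rcases max_cases 0 (2 * p - 1) with ⟨h, -⟩ | ⟨h, -⟩ <;> rw [h] <;> nlinarith
  have h := bernoulliKL_le_of_inv_le hp0 hpx hx1 fun t ht =>
    inv_var_le hp ht.1 (le_max_left 0 (2 * p - 1)) (le_max_right _ _) hhv
      (by linarith [ht.2])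
  calc 2 * bernoulliKL x p ≤ 2 * _ := mul_le_mul_of_nonneg_left h zero_le_two
    _ = _ := by
        generalize p * (1 - p) = v at hv
        field_simp
        ring

theorem le_two_mul_bernoulliKL_of_le {p x h : ℝ} (hp : p ∈ Ioo (0 : ℝ) 1) (hpx : p ≤ x)
    (hx : x < 1) (hh : 0 ≤ h) (hph : 1 - 2 * p ≤ h) :
    (x - p) ^ 2 / (p * (1 - p)) * (1 - h * (x - p) / (3 * (p * (1 - p)))) ≤
      2 * bernoulliKL x p := by
  have hv := mul_one_sub_pos hp
  have hle := le_bernoulliKL_of_le_inv (a := 1 / (p * (1 - p))) (b := -h / (p * (1 - p)) ^ 2)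
    (c := 0) hp.1 hpx hx fun t ht => ?_
  · calc _ = 2 * (1 / (p * (1 - p)) * (x - p) ^ 2 / 2 +
          -h / (p * (1 - p)) ^ 2 * (x - p) ^ 3 / 6 + 0 * (x - p) ^ 4 / 12) := by
          generalize p * (1 - p) = v at hv
          field_simp
          ring
      _ ≤ _ := mul_le_mul_of_nonneg_left hle zero_le_two
  · have hd : 0 ≤ h * (t - p) := mul_nonneg hh (sub_nonneg.2 ht.1)
    have hvt : t * (1 - t) ≤ p * (1 - p) + h * (t - p) := by nlinarith [ht.1]
    have ht0 := mul_one_sub_pos ⟨hp.1.trans_le ht.1, ht.2.trans_lt hx⟩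
    generalize p * (1 - p) = v at hv hvt
    calc _ = (v - h * (t - p)) / v ^ 2 := by
          field_simp
          ring
      _ ≤ 1 / (v + h * (t - p)) := by
          rw [div_le_div_iff₀ (by positivity) (by positivity)]
          nlinarith
      _ ≤ 1 / (t * (1 - t)) := one_div_le_one_div_of_le ht0 hvt

theorem le_two_mul_bernoulliKL {p x : ℝ} (hp : p ∈ Ioo (0 : ℝ) 1) (hx : 0 < x) (hxp : x ≤ p) :
    (p - x) ^ 2 / (p * (1 - p)) * (1 - max 0 (2 * p - 1) * (p - x) / (3 * (p * (1 - p)))) ≤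
      2 * bernoulliKL x p := by
  have h := le_two_mul_bernoulliKL_of_le (one_sub_mem_Ioo hp) (sub_le_sub_left hxp 1)
    (sub_lt_self 1 hx) (le_max_left 0 (2 * p - 1)) (by linarith [le_max_right 0 (2 * p - 1)])
  rw [bernoulliKL_one_sub, sub_sub_sub_cancel_left, sub_sub_cancel, mul_comm (1 - p) p] at h
  exact h

/-! ### The central region -/

/-- The standardized deviation of an observed frequency `x` in `N` trials (`N` may be fractional)
with success probability `p`; the normal approximation compares `signedDeviance N x p` with its
negative. -/
noncomputable def zScore (N x p : ℝ) : ℝ :=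
  N * (x - p) / √(N * (p * (1 - p)))

theorem zScore_sq {N p : ℝ} (hN : 0 < N) (hp : p ∈ Ioo (0 : ℝ) 1) (x : ℝ) :
    zScore N x p ^ 2 = N * ((x - p) ^ 2 / (p * (1 - p))) := by
  have hv := mul_one_sub_pos hp
  rw [zScore, div_pow, sq_sqrt (by positivity)]
  field_simp

theorem zScore_div_sqrt {N p : ℝ} (hN : 0 < N) (hp : p ∈ Ioo (0 : ℝ) 1) (x : ℝ) :
    zScore N x p / √(N * (p * (1 - p))) = (x - p) / (p * (1 - p)) := by
  have hv := mul_one_sub_pos hp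
  rw [zScore, div_div, mul_self_sqrt (by positivity)]
  field_simp

theorem sqrt_bernoulliKL_le_zScore {N p x : ℝ} (hN : 0 < N) (hp : p ∈ Ioo (0 : ℝ) 1) (hpx : p ≤ x)
    (hx : x - p ≤ 0.34 * (p * (1 - p))) :
    √(2 * N * bernoulliKL x p) ≤ zScore N x p * (1 + 1.52 *
      (max 0 (2 * p - 1) / (6 * √(N * (p * (1 - p)))) * zScore N x p +
        zScore N x p ^ 2 / (12 * N))) := by
  have hsq := zScore_sq hN hp x
  have hdiv := zScore_div_sqrt hN hp x
  have hz : 0 ≤ zScore N x p := div_nonneg (mul_nonneg hN.le (sub_nonneg.2 hpx)) (sqrt_nonneg _)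
  have hK := mul_le_mul_of_nonneg_left (two_mul_bernoulliKL_le hp hpx hx) hN.le
  set h := max 0 (2 * p - 1)
  set z := zScore N x p
  set R := √(N * (p * (1 - p)))
  set τ := 1.52 * (h / (6 * R) * z + z ^ 2 / (12 * N)) with hτ
  have hsum : 1.52 * (h * (x - p) / (3 * (p * (1 - p))) + (x - p) ^ 2 / (6 * (p * (1 - p)))) =
      2 * τ := by
    calc _ = 1.52 * (h * ((x - p) / (p * (1 - p))) / 3 +
          N * ((x - p) ^ 2 / (p * (1 - p))) / (6 * N)) := by field_simp
      _ = _ := by rw [← hdiv, ← hsq, hτ]; field_simp; ring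
  refine sqrt_le_iff.2 ⟨by positivity, ?_⟩
  calc 2 * N * bernoulliKL x p = N * (2 * bernoulliKL x p) := by ring
    _ ≤ z ^ 2 * (1 + 2 * τ) := by rw [hsq, ← hsum, mul_assoc N]; exact hK
    _ ≤ (z * (1 + τ)) ^ 2 := by
        rw [mul_pow]
        exact mul_le_mul_of_nonneg_left (by linarith [sq_nonneg τ]) (sq_nonneg z)

theorem Phi_sqrt_bernoulliKL_le {N p x : ℝ} (hN : 0 < N) (hp : p ∈ Ioo (0 : ℝ) 1) (hpx : p ≤ x)
    (hx : x - p ≤ 0.34 * (p * (1 - p))) :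
    Phi √(2 * N * bernoulliKL x p) ≤ Phi (zScore N x p) +
      φ 0 * max 0 (2 * p - 1) / (3 * √(N * (p * (1 - p)))) + 0.102 / N := by
  have hz : 0 ≤ zScore N x p := div_nonneg (mul_nonneg hN.le (sub_nonneg.2 hpx)) (sqrt_nonneg _)
  have hsqrt := sqrt_bernoulliKL_le_zScore hN hp hpx hx
  set h := max 0 (2 * p - 1)
  set z := zScore N x p
  set R := √(N * (p * (1 - p)))
  set τ := 1.52 * (h / (6 * R) * z + z ^ 2 / (12 * N)) with hτ
  have hτ0 : 0 ≤ τ := by positivity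
  have hincr := Phi_sub_Phi_le (show z ≤ z * (1 + τ) by nlinarith)
    fun t ht => phi_le_phi_of_abs_le (abs_le_abs_of_nonneg hz ht.1)
  have hskew := mul_le_mul_of_nonneg_left (sq_mul_phi_le z) (show 0 ≤ h / (6 * R) by positivity)
  have hkurt := mul_le_mul_of_nonneg_left ((cube_mul_phi_le z).trans
    (mul_le_mul_of_nonneg_left phi_zero_le zero_le_two)) (show 0 ≤ 1 / (12 * N) by positivity)
  have hskew0 : 0 ≤ h / (6 * R) * φ 0 := mul_nonneg (by positivity) (phi_pos 0).le
  have hle : φ z * (z * (1 + τ) - z) ≤ φ 0 * h / (3 * R) + 0.102 / N := by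
    calc φ z * (z * (1 + τ) - z) =
        1.52 * (h / (6 * R) * (z ^ 2 * φ z) + 1 / (12 * N) * (z ^ 3 * φ z)) := by rw [hτ]; ring
      _ ≤ 1.52 * (h / (6 * R) * φ 0 + 1 / (12 * N) * (2 * 0.4)) := by
          gcongr 1.52 * ?_
          exact add_le_add hskew hkurt
      _ = 1.52 * (h / (6 * R) * φ 0) + 0.304 / 3 * (1 / N) := by ring
      _ ≤ 2 * (h / (6 * R) * φ 0) + 0.102 * (1 / N) := by gcongr <;> norm_num
      _ = _ := by ring
  linarith [Phi_mono hsqrt]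

theorem skew_mul_zScore_mem_Icc {N p x : ℝ} (hN : 0 < N) (hp : p ∈ Ioo (0 : ℝ) 1) (hxp : x ≤ p)
    (hpx : p - x ≤ 0.34 * (p * (1 - p))) :
    max 0 (2 * p - 1) * (-zScore N x p / √(N * (p * (1 - p)))) ∈ Icc (0 : ℝ) 0.34 := by
  have hv := mul_one_sub_pos hp
  rw [neg_div, zScore_div_sqrt hN hp x, ← neg_div, neg_sub]
  have hd0 : 0 ≤ (p - x) / (p * (1 - p)) := div_nonneg (sub_nonneg.2 hxp) hv.le
  have hd : (p - x) / (p * (1 - p)) ≤ 0.34 := (div_le_iff₀ hv).2 hpx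
  have hh : max 0 (2 * p - 1) ≤ 1 := max_le zero_le_one (by linarith [hp.2])
  exact ⟨mul_nonneg (le_max_left _ _) hd0, (mul_le_of_le_one_left hd0 hh).trans hd⟩

theorem zScore_le_sqrt_bernoulliKL {N p x : ℝ} (hN : 0 < N) (hp : p ∈ Ioo (0 : ℝ) 1) (hx : 0 < x)
    (hxp : x ≤ p) (hpx : p - x ≤ 0.34 * (p * (1 - p))) :
    -zScore N x p * (1 - 0.2 * (max 0 (2 * p - 1) * (-zScore N x p / √(N * (p * (1 - p)))))) ≤
      √(2 * N * bernoulliKL x p) := by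
  have hsq := zScore_sq hN hp x
  have hK := mul_le_mul_of_nonneg_left (le_two_mul_bernoulliKL hp hx hxp) hN.le
  obtain ⟨ht0, ht1⟩ := skew_mul_zScore_mem_Icc hN hp hxp hpx
  rw [neg_div, zScore_div_sqrt hN hp x, ← neg_div, neg_sub] at ht0 ht1 ⊢
  set h := max 0 (2 * p - 1)
  set t := h * ((p - x) / (p * (1 - p))) with ht
  refine le_sqrt_of_sq_le ?_
  calc (-zScore N x p * (1 - 0.2 * t)) ^ 2 = zScore N x p ^ 2 * (1 - 0.2 * t) ^ 2 := by ring
    _ ≤ zScore N x p ^ 2 * (1 - t / 3) :=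
        mul_le_mul_of_nonneg_left (by nlinarith) (sq_nonneg _)
    _ = N * ((p - x) ^ 2 / (p * (1 - p)) * (1 - h * (p - x) / (3 * (p * (1 - p))))) := by
        rw [hsq, ht]
        field_simp
        ring
    _ ≤ _ := hK.trans_eq (by ring)

theorem Phi_neg_sqrt_bernoulliKL_le {N p x : ℝ} (hN : 0 < N) (hp : p ∈ Ioo (0 : ℝ) 1) (hx : 0 < x)
    (hxp : x ≤ p) (hpx : p - x ≤ 0.34 * (p * (1 - p))) :
    Phi (-√(2 * N * bernoulliKL x p)) ≤ Phi (zScore N x p) +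
      φ 0 * max 0 (2 * p - 1) / (3 * √(N * (p * (1 - p)))) := by
  have hsqrt := zScore_le_sqrt_bernoulliKL hN hp hx hxp hpx
  obtain ⟨ht0, ht1⟩ := skew_mul_zScore_mem_Icc hN hp hxp hpx
  have hy0 : 0 ≤ -zScore N x p := by
    rw [zScore, ← neg_div, ← mul_neg, neg_sub]
    exact div_nonneg (mul_nonneg hN.le (sub_nonneg.2 hxp)) (sqrt_nonneg _)
  have hh : 0 ≤ max 0 (2 * p - 1) := le_max_left _ _
  generalize max 0 (2 * p - 1) = h at hh ht0 ht1 hsqrt ⊢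
  rw [← neg_neg (zScore N x p)]
  generalize -zScore N x p = y at hy0 ht0 ht1 hsqrt ⊢
  set R := √(N * (p * (1 - p)))
  set u := y * (1 - 0.2 * (h * (y / R))) with hu
  have hu0 : 0.93 * y ≤ u := by nlinarith
  have hincr := Phi_neg_sub_Phi_neg_le (hu0.trans' (by positivity)) (by nlinarith : u ≤ y)
  have hle : φ u * (y - u) ≤ φ 0 * h / (3 * R) := by
    calc φ u * (y - u) = h / R * (0.2 * y ^ 2) * φ u := by rw [hu]; ring
      _ ≤ h / R * (u ^ 2 / 3) * φ u := by
          have hφ := (phi_pos u).le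
          gcongr
          nlinarith
      _ = h / (3 * R) * (u ^ 2 * φ u) := by ring
      _ ≤ h / (3 * R) * φ 0 := mul_le_mul_of_nonneg_left (sq_mul_phi_le u) (by positivity)
      _ = _ := by ring
  linarith [Phi_mono (neg_le_neg hsqrt)]

theorem Phi_div_le_of_nonpos {d R S ε : ℝ} (hd : d ≤ 0) (hS : 0 < S) (hSR : S ≤ R)
    (hRS : R ≤ S * (1 + ε)) : Phi (d / R) ≤ Phi (d / S) + φ 0 * ε := by
  have hR := hS.trans_le hSR
  have hy : 0 ≤ -d / R := div_nonneg (neg_nonneg.2 hd) hR.le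
  have hε : 0 ≤ ε := by nlinarith
  have hratio : R / S - 1 ≤ ε := by
    rw [sub_le_iff_le_add', div_le_iff₀' hS]
    exact hRS
  have hincr := Phi_neg_sub_Phi_neg_le hy (div_le_div_of_nonneg_left (neg_nonneg.2 hd) hS hSR)
  rw [neg_div, neg_div, neg_neg, neg_neg, ← neg_div, ← neg_div] at hincr
  have hle : φ (-d / R) * (-d / S - -d / R) ≤ φ 0 * ε := by
    calc φ (-d / R) * (-d / S - -d / R) = -d / R * φ (-d / R) * (R / S - 1) := by
          field_simp
          ring
      _ ≤ -d / R * φ (-d / R) * ε :=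
          mul_le_mul_of_nonneg_left hratio (mul_nonneg hy (phi_pos _).le)
      _ ≤ φ 0 * ε := mul_le_mul_of_nonneg_right (mul_phi_le _) hε
  linarith

theorem sqrt_add_third_mul_le {n v : ℝ} (hn : 0 < n) (hv : 0 ≤ v) :
    √((n + 1 / 3) * v) ≤ √(n * v) * (1 + 1 / (6 * n)) := by
  refine sqrt_le_iff.2 ⟨by positivity, ?_⟩
  calc (n + 1 / 3) * v ≤ (n + 1 / 3) * v + v / (36 * n) := by
        have : 0 ≤ v / (36 * n) := by positivity
        linarith
    _ = n * v * (1 + 1 / (6 * n)) ^ 2 := by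
        field_simp
        ring
    _ = _ := by rw [mul_pow, sq_sqrt (by positivity)]

theorem mem_Ioo_of_variance_pos {n : ℕ} {p : ℝ} (hσ : 0 < n * (p * (1 - p))) :
    p ∈ Ioo (0 : ℝ) 1 := by
  constructor <;> nlinarith [sq_nonneg p, sq_nonneg (1 - p)]

theorem mul_one_sub_le_of_abs_sub_le {p x : ℝ} (hp : p ∈ Ioo (0 : ℝ) 1)
    (hx : |x - p| ≤ 0.34 * (p * (1 - p))) : 0.66 * (p * (1 - p)) ≤ x * (1 - x) := by
  have hp0 := hp.1
  have hp1 := hp.2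
  have hq0 := sub_pos.2 hp1
  obtain ⟨hlow, hupp⟩ := abs_le.1 hx
  have hcoeff : 0 ≤ 1 - 0.34 * p := by linarith
  calc 0.66 * (p * (1 - p)) ≤ p * (1 - 0.34 * (1 - p)) * ((1 - p) * (1 - 0.34 * p)) := by
        nlinarith [sq_nonneg (p * (1 - p))]
    _ ≤ x * (1 - x) :=
        mul_le_mul (by linarith) (by linarith) (mul_nonneg hq0.le hcoeff) (by nlinarith)

theorem moment_error_le {s t : ℝ} (hs : 100 ≤ s) (hst : 0.66 * s ≤ t) :
    0.075625 / t + 15 / t ^ 3 ≤ 0.12 / s := by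
  have ht : 66 ≤ t := by linarith
  have ht2 : 15 / t ^ 2 ≤ 15 / 66 ^ 2 := by gcongr
  calc 0.075625 / t + 15 / t ^ 3 = (0.075625 + 15 / t ^ 2) / t := by field_simp
    _ ≤ 0.0792 / (0.66 * s) := by
        gcongr
        linarith
    _ = 0.12 / s := by
        field_simp
        norm_num

theorem lt_of_abs_sub_mean_le {n k : ℕ} {p : ℝ} (hσ : 0 < n * (p * (1 - p)))
    (hk : |k - n * p| ≤ n * (p * (1 - p)) / 3) : k < n := by
  have hnp := mul_nonneg n.cast_nonneg (sq_nonneg (1 - p))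
  have hkn : (k : ℝ) < n := by nlinarith [(abs_le.1 hk).2]
  exact_mod_cast hkn

theorem mul_betaMedian_sub (n k : ℕ) (p : ℝ) :
    (n + 1 / 3) * (betaMedian n k - p) = k - n * p + (2 - p) / 3 := by
  rw [mul_sub, mul_betaMedian]
  ring

theorem abs_betaMedian_sub_le {n k : ℕ} {p : ℝ} (hσ : 100 ≤ n * (p * (1 - p)))
    (hk : |k - n * p| ≤ n * (p * (1 - p)) / 3) :
    |betaMedian n k - p| ≤ 0.34 * (p * (1 - p)) := by
  have hp := mem_Ioo_of_variance_pos (hσ.trans_lt' (by norm_num))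
  have hp1 := hp.2
  have hN : (0 : ℝ) < n + 1 / 3 := by positivity
  have habs : (n + 1 / 3) * |betaMedian n k - p| ≤ |k - n * p| + 2 / 3 := by
    rw [← abs_of_pos hN, ← abs_mul, mul_betaMedian_sub]
    refine (abs_add_le _ _).trans (add_le_add_right ?_ _)
    rw [abs_of_nonneg] <;> linarith [hp.1]
  refine le_of_mul_le_mul_left ?_ hN
  linarith [mul_one_sub_pos hp]

theorem four_mul_variance_le (n : ℕ) (p : ℝ) : 4 * (n * (p * (1 - p))) ≤ n := by
  nlinarith [mul_nonneg n.cast_nonneg (sq_nonneg (2 * p - 1))]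

theorem Phi_neg_signedDeviance_le_of_lt {n k : ℕ} {p : ℝ} (hp : p ∈ Ioo (0 : ℝ) 1)
    (hσ : 0 < n * (p * (1 - p))) (hpx : p < betaMedian n k)
    (hx : betaMedian n k - p ≤ 0.34 * (p * (1 - p))) :
    Phi (-signedDeviance (n + 1 / 3) (betaMedian n k) p) ≤
      Phi ((k - n * p + (2 - p) / 3) / √(n * (p * (1 - p)))) +
        φ 0 * max 0 (2 * p - 1) / (3 * √(n * (p * (1 - p)))) + 0.026 / (n * (p * (1 - p))) := by
  have hN : (0 : ℝ) < n + 1 / 3 := by positivity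
  have hnN : (n : ℝ) ≤ n + 1 / 3 := by linarith
  have herror : 0.102 / (n + 1 / 3) ≤ 0.026 / (n * (p * (1 - p))) := by
    rw [div_le_div_iff₀ hN hσ]
    linarith [four_mul_variance_le n p]
  have hφ := phi_pos 0
  have hv := mul_one_sub_pos hp
  have hbound := Phi_sqrt_bernoulliKL_le hN hp hpx.le hx
  rw [zScore] at hbound
  rw [signedDeviance_of_lt hpx, neg_neg, ← mul_betaMedian_sub]
  refine hbound.trans ?_
  gcongr
  refine Phi_mono ?_
  gcongr

theorem Phi_neg_signedDeviance_le_of_ge {n k : ℕ} {p : ℝ} (hp : p ∈ Ioo (0 : ℝ) 1)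
    (hσ : 0 < n * (p * (1 - p))) (hkn : k < n) (hxp : betaMedian n k ≤ p)
    (hpx : p - betaMedian n k ≤ 0.34 * (p * (1 - p))) :
    Phi (-signedDeviance (n + 1 / 3) (betaMedian n k) p) ≤
      Phi ((k - n * p + (2 - p) / 3) / √(n * (p * (1 - p)))) +
        φ 0 * max 0 (2 * p - 1) / (3 * √(n * (p * (1 - p)))) + 0.026 / (n * (p * (1 - p))) := by
  have hS : 0 < √(n * (p * (1 - p))) := sqrt_pos.2 hσ
  have hN : (0 : ℝ) < n + 1 / 3 := by positivity
  have hn : (0 : ℝ) < n := pos_of_mul_pos_left hσ (mul_one_sub_pos hp).le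
  have hd : (n + 1 / 3) * (betaMedian n k - p) ≤ 0 :=
    mul_nonpos_of_nonneg_of_nonpos hN.le (sub_nonpos.2 hxp)
  have hφ := phi_pos 0
  have hv := mul_one_sub_pos hp
  have hSR : √(n * (p * (1 - p))) ≤ √((n + 1 / 3) * (p * (1 - p))) := by
    gcongr
    linarith
  have hskew : φ 0 * max 0 (2 * p - 1) / (3 * √((n + 1 / 3) * (p * (1 - p)))) ≤
      φ 0 * max 0 (2 * p - 1) / (3 * √(n * (p * (1 - p)))) := by gcongr
  have herror : φ 0 * (1 / (6 * n)) ≤ 0.026 / (n * (p * (1 - p))) := by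
    refine (mul_le_mul_of_nonneg_right phi_zero_le (by positivity)).trans ?_
    rw [← mul_div_assoc, div_le_div_iff₀ (by positivity) hσ]
    linarith [four_mul_variance_le n p]
  have hbound := Phi_neg_sqrt_bernoulliKL_le hN hp (betaMedian_mem_Ioo hkn).1 hxp hpx
  rw [zScore] at hbound
  rw [signedDeviance_of_le hxp, ← mul_betaMedian_sub]
  linarith [Phi_div_le_of_nonpos hd hS hSR (sqrt_add_third_mul_le hn hv.le)]

theorem Phi_neg_signedDeviance_le {n k : ℕ} {p : ℝ} (hσ : 100 ≤ n * (p * (1 - p)))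
    (hk : |k - n * p| ≤ n * (p * (1 - p)) / 3) :
    Phi (-signedDeviance (n + 1 / 3) (betaMedian n k) p) ≤
      Phi ((k - n * p + (2 - p) / 3) / √(n * (p * (1 - p)))) +
        φ 0 * max 0 (2 * p - 1) / (3 * √(n * (p * (1 - p)))) + 0.026 / (n * (p * (1 - p))) := by
  have hσ0 : 0 < n * (p * (1 - p)) := by linarith
  have hp := mem_Ioo_of_variance_pos hσ0
  obtain ⟨hlow, hupp⟩ := abs_le.1 (abs_betaMedian_sub_le hσ hk)
  rcases lt_or_ge p (betaMedian n k) with hpx | hxp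
  · exact Phi_neg_signedDeviance_le_of_lt hp hσ0 hpx hupp
  · exact Phi_neg_signedDeviance_le_of_ge hp hσ0 (lt_of_abs_sub_mean_le hσ0 hk) hxp (by linarith)

theorem binomLower_le_of_abs_sub_le {n k : ℕ} {p : ℝ} (hσ : 100 ≤ n * (p * (1 - p)))
    (hk : |k - n * p| ≤ n * (p * (1 - p)) / 3) :
    binomLower n k p ≤ Phi ((k - n * p + (2 - p) / 3) / √(n * (p * (1 - p)))) +
      φ 0 * max 0 (2 * p - 1) / (3 * √(n * (p * (1 - p)))) + 0.146 / (n * (p * (1 - p))) := by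
  have hσ0 : 0 < n * (p * (1 - p)) := by linarith
  have hp := mem_Ioo_of_variance_pos hσ0
  have hvar := mul_one_sub_le_of_abs_sub_le hp (abs_betaMedian_sub_le hσ hk)
  have hscale : 0.66 * (n * (p * (1 - p))) ≤
      (n + 1 / 3) * (betaMedian n k * (1 - betaMedian n k)) := by
    calc 0.66 * (n * (p * (1 - p))) = n * (0.66 * (p * (1 - p))) := by ring
      _ ≤ _ := mul_le_mul (by linarith) hvar (by linarith [mul_one_sub_pos hp]) (by positivity)
  have hsum : 0.12 / (n * (p * (1 - p))) + 0.026 / (n * (p * (1 - p))) =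
      0.146 / (n * (p * (1 - p))) := by
    rw [← add_div]
    norm_num
  linarith [binomLower_le_Phi_neg_signedDeviance (lt_of_abs_sub_mean_le hσ0 hk) hp,
    Phi_neg_signedDeviance_le hσ hk, moment_error_le hσ hscale]

/-! ### From the central region to all of `ℝ` -/

theorem three_mul_le_exp_sq_half {S x : ℝ} (hS : 10 ≤ S) (hx : 0.3 * S ≤ x) :
    3 * S ≤ exp (x ^ 2 / 2) := by
  have hx2 : (0.3 * S) ^ 2 ≤ x ^ 2 := pow_le_pow_left₀ (by positivity) hx 2
  set w := x ^ 2 / 4 with hw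
  have hwS : 0.45 * S - 2.25 ≤ w := by nlinarith [sq_nonneg (S - 10)]
  have hexp : 0.55 * S ≤ exp w :=
    (show 0.55 * S ≤ 1 + w + w ^ 2 / 2 by nlinarith [sq_nonneg (w - 2.25)]).trans
      (quadratic_le_exp_of_nonneg (by linarith))
  calc 3 * S ≤ (0.55 * S) ^ 2 := by nlinarith
    _ ≤ exp w ^ 2 := pow_le_pow_left₀ (by positivity) hexp 2
    _ = exp (x ^ 2 / 2) := by
        rw [← exp_nat_mul, hw]
        congr 1
        push_cast
        ring

theorem Phi_neg_le_of_le {S x : ℝ} (hS : 10 ≤ S) (hx : 0.3 * S ≤ x) :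
    Phi (-x) ≤ φ 0 / (3 * S) := by
  rw [le_div_iff₀ (by positivity)]
  calc Phi (-x) * (3 * S) ≤ φ x * exp (x ^ 2 / 2) :=
        mul_le_mul (Phi_neg_le_phi (by linarith)) (three_mul_le_exp_sq_half hS hx) (by positivity)
          (phi_pos x).le
    _ = φ 0 := phi_mul_exp x

/-- The uniform error of the normal approximation: the continuity correction `(2 - p) / 3` and the
excess skewness `max 0 (2 * p - 1) / 3` add up to `(1 + max p (1 - p)) / 3`. -/
noncomputable def normalError (n : ℕ) (p : ℝ) : ℝ :=
  φ 0 * (1 + max p (1 - p)) / (3 * √(n * (p * (1 - p)))) + 0.146 / (n * (p * (1 - p)))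

theorem normalError_one_sub (n : ℕ) (p : ℝ) : normalError n (1 - p) = normalError n p := by
  simp only [normalError, sub_sub_cancel, mul_comm (1 - p) p, max_comm (1 - p) p]

theorem one_add_max_one_sub (p : ℝ) : 1 + max p (1 - p) = 2 - p + max 0 (2 * p - 1) := by
  rcases le_total p (1 - p) with h | h
  · rw [max_eq_right h, max_eq_left (by linarith)]
    ring
  · rw [max_eq_left h, max_eq_right (by linarith)]
    ring

theorem normalError_eq (n : ℕ) (p : ℝ) :
    normalError n p = φ 0 * (2 - p) / (3 * √(n * (p * (1 - p)))) +
      φ 0 * max 0 (2 * p - 1) / (3 * √(n * (p * (1 - p)))) + 0.146 / (n * (p * (1 - p))) := by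
  rw [normalError, one_add_max_one_sub]
  ring

theorem div_add_le_normalError {n : ℕ} {p : ℝ} (hσ : 0 < n * (p * (1 - p))) :
    φ 0 / (3 * √(n * (p * (1 - p)))) + φ 0 * max 0 (2 * p - 1) / (3 * √(n * (p * (1 - p)))) +
      0.146 / (n * (p * (1 - p))) ≤ normalError n p := by
  have hp1 := (mem_Ioo_of_variance_pos hσ).2
  rw [normalError_eq]
  gcongr
  exact le_mul_of_one_le_right (phi_pos 0).le (by linarith)

theorem div_le_normalError {n : ℕ} {p : ℝ} (hσ : 0 < n * (p * (1 - p))) :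
    φ 0 / (3 * √(n * (p * (1 - p)))) ≤ normalError n p := by
  have hφ := phi_pos 0
  have hskew : 0 ≤ φ 0 * max 0 (2 * p - 1) / (3 * √(n * (p * (1 - p)))) := by positivity
  have hrest : 0 ≤ 0.146 / (n * (p * (1 - p))) := by positivity
  linarith [div_add_le_normalError hσ]

theorem binomLower_le_one (n k : ℕ) {p : ℝ} (hp : p ∈ Icc (0 : ℝ) 1) : binomLower n k p ≤ 1 := by
  have hmax : binomLower n (max k n) p = binomLower n n p := by
    refine (Finset.sum_subset (Finset.range_mono (by omega)) fun i _ hi => ?_).symm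
    rw [Finset.mem_range, not_lt] at hi
    rw [bernsteinPolynomial.eq_zero_of_lt ℝ hi, Polynomial.eval_zero]
  rw [← binomLower_self n p, ← hmax]
  exact binomLower_mono n hp (le_max_left k n)

theorem binomLower_le_of_mean_add_le {n k : ℕ} {p : ℝ} (hσ : 100 ≤ n * (p * (1 - p)))
    (hk : n * (p * (1 - p)) / 3 ≤ k - n * p) :
    binomLower n k p ≤ Phi ((k - n * p) / √(n * (p * (1 - p)))) + normalError n p := by
  have hσ0 : 0 < n * (p * (1 - p)) := by linarith
  have hS : 10 ≤ √(n * (p * (1 - p))) := le_sqrt_of_sq_le (by linarith)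
  have htail := Phi_neg_le_of_le hS (x := (k - n * p) / √(n * (p * (1 - p)))) <| by
    rw [le_div_iff₀ (by linarith), mul_assoc, mul_self_sqrt hσ0.le]
    linarith
  rw [Phi_neg] at htail
  linarith [binomLower_le_one n k (Ioo_subset_Icc_self (mem_Ioo_of_variance_pos hσ0)),
    div_le_normalError hσ0]

theorem binomLower_le_of_le_mean_sub {n k : ℕ} {p : ℝ} (hσ : 100 ≤ n * (p * (1 - p)))
    (hk : k - n * p ≤ -(n * (p * (1 - p)) / 3)) :
    binomLower n k p ≤ Phi ((k - n * p) / √(n * (p * (1 - p)))) + normalError n p := by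
  have hσ0 : 0 < n * (p * (1 - p)) := by linarith
  have hp := mem_Ioo_of_variance_pos hσ0
  have hS : 10 ≤ √(n * (p * (1 - p))) := le_sqrt_of_sq_le (by linarith)
  set j := ⌈n * p - n * (p * (1 - p)) / 3⌉₊
  have hj0 : n * p - n * (p * (1 - p)) / 3 ≤ j := Nat.le_ceil _
  have hj1 : j < n * p - n * (p * (1 - p)) / 3 + 1 := Nat.ceil_lt_add_one <| by
    linarith [k.cast_nonneg (α := ℝ)]
  have hkj : k ≤ j := by
    have : (k : ℝ) ≤ j := by linarith
    exact_mod_cast this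
  have hcentral := binomLower_le_of_abs_sub_le hσ
    (abs_le.2 ⟨by linarith, by linarith⟩ : |j - n * p| ≤ n * (p * (1 - p)) / 3)
  have htail := Phi_neg_le_of_le hS
    (x := -((j - n * p + (2 - p) / 3) / √(n * (p * (1 - p))))) <| by
      rw [← neg_div, le_div_iff₀ (by linarith), mul_assoc, mul_self_sqrt hσ0.le]
      linarith [hp.1]
  rw [neg_neg] at htail
  have hmono : binomLower n k p ≤ binomLower n j p :=
    binomLower_mono n (Ioo_subset_Icc_self hp) hkj
  linarith [div_add_le_normalError hσ0, Phi_nonneg ((k - n * p) / √(n * (p * (1 - p))))]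

theorem binomLower_le_Phi_add_normalError (n k : ℕ) {p : ℝ} (hσ : 100 ≤ n * (p * (1 - p))) :
    binomLower n k p ≤ Phi ((k - n * p) / √(n * (p * (1 - p)))) + normalError n p := by
  rcases le_total (n * (p * (1 - p)) / 3) (k - n * p) with hk | hupp
  · exact binomLower_le_of_mean_add_le hσ hk
  rcases le_total (k - n * p) (-(n * (p * (1 - p)) / 3)) with hk | hlow
  · exact binomLower_le_of_le_mean_sub hσ hk
  have hp1 := (mem_Ioo_of_variance_pos (hσ.trans_lt' (by norm_num))).2
  have hshift := Phi_add_le ((k - n * p) / √(n * (p * (1 - p))))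
    (c := (2 - p) / 3 / √(n * (p * (1 - p))))
    (div_nonneg (by linarith) (sqrt_nonneg _))
  rw [← add_div] at hshift
  have hcorr : φ 0 * ((2 - p) / 3 / √(n * (p * (1 - p)))) =
      φ 0 * (2 - p) / (3 * √(n * (p * (1 - p)))) := by ring
  rw [normalError_eq]
  linarith [binomLower_le_of_abs_sub_le hσ (abs_le.2 ⟨hlow, hupp⟩)]

/-- The right-continuous binomial distribution function, which reflection `i ↦ n - i` exchanges with
the left-continuous `binomCDF`. -/
noncomputable def binomCDFRight (n : ℕ) (p x : ℝ) : ℝ :=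
  ∑ i ∈ Finset.range (n + 1) with ((i : ℕ) : ℝ) ≤ x, (bernsteinPolynomial ℝ n i).eval p

theorem binomCDF_le_binomCDFRight (n : ℕ) {p : ℝ} (hp : p ∈ Icc (0 : ℝ) 1) (x : ℝ) :
    binomCDF n p x ≤ binomCDFRight n p x := by
  simp only [binomCDF, ← eval_bernsteinPolynomial, ← Finset.sum_filter]
  exact Finset.sum_le_sum_of_subset_of_nonneg
    (Finset.monotone_filter_right _ fun _ _ hi => le_of_lt hi)
    fun i _ _ => eval_bernsteinPolynomial_nonneg n i hp

theorem one_sub_binomCDF (n : ℕ) (p x : ℝ) :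
    1 - binomCDF n p x = binomCDFRight n (1 - p) (n - x) := by
  have hone : 1 - binomCDF n p x = binomLower n n p - binomCDF n p x := by rw [binomLower_self]
  rw [hone, binomLower, binomCDF, binomCDFRight, Finset.sum_filter,
    ← Finset.sum_sub_distrib, ← Finset.sum_range_reflect]
  refine Finset.sum_congr rfl fun i hi => ?_
  have hin : i ≤ n := Nat.lt_succ_iff.1 (Finset.mem_range.1 hi)
  rw [show n + 1 - 1 - i = n - i by omega, ← eval_bernsteinPolynomial, Nat.cast_sub hin]
  have hflip : (bernsteinPolynomial ℝ n (n - i)).eval p =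
      (bernsteinPolynomial ℝ n i).eval (1 - p) := by
    rw [← bernsteinPolynomial.flip ℝ n i hin]
    simp
  rw [hflip]
  by_cases h : (n : ℝ) - i < x
  · rw [if_pos h, if_neg (by linarith), sub_self]
  · rw [if_neg h, if_pos (by linarith), sub_zero]

theorem binomCDFRight_le (n : ℕ) {p : ℝ} (hσ : 100 ≤ n * (p * (1 - p))) (x : ℝ) :
    binomCDFRight n p x ≤ Phi ((x - n * p) / √(n * (p * (1 - p)))) + normalError n p := by
  have hσ0 : 0 < n * (p * (1 - p)) := by linarith
  rcases lt_or_ge x 0 with hx | hx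
  · have hempty : binomCDFRight n p x = 0 := by
      rw [binomCDFRight, Finset.sum_filter]
      exact Finset.sum_eq_zero fun i _ => if_neg (hx.trans_le i.cast_nonneg).not_ge
    rw [hempty]
    exact add_nonneg (Phi_nonneg _)
      ((div_nonneg (phi_pos 0).le (by positivity)).trans (div_le_normalError hσ0))
  · calc binomCDFRight n p x ≤ binomLower n ⌊x⌋₊ p := by
          refine Finset.sum_le_sum_of_subset_of_nonneg (fun i hi => ?_) fun i _ _ =>
            eval_bernsteinPolynomial_nonneg n i (Ioo_subset_Icc_self (mem_Ioo_of_variance_pos hσ0))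
          exact Finset.mem_range_succ_iff.2 (Nat.le_floor (Finset.mem_filter.1 hi).2)
      _ ≤ Phi ((⌊x⌋₊ - n * p) / √(n * (p * (1 - p)))) + normalError n p :=
          binomLower_le_Phi_add_normalError n ⌊x⌋₊ hσ
      _ ≤ _ := by
          gcongr
          exact Phi_mono (by gcongr; exact Nat.floor_le hx)

theorem abs_binomCDF_sub_Phi_le (n : ℕ) {p : ℝ} (hσ : 100 ≤ n * (p * (1 - p))) (x : ℝ) :
    |binomCDF n p x - Phi ((x - n * p) / √(n * (p * (1 - p))))| ≤ normalError n p := by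
  have hp := Ioo_subset_Icc_self (mem_Ioo_of_variance_pos (hσ.trans_lt' (by norm_num)))
  have hswap : (1 - p) * (1 - (1 - p)) = p * (1 - p) := by ring
  have hreflect := binomCDFRight_le n (p := 1 - p) (hswap ▸ hσ) (n - x)
  have hz : (n - x - n * (1 - p)) / √(n * (p * (1 - p))) =
      -((x - n * p) / √(n * (p * (1 - p)))) := by ring
  rw [← one_sub_binomCDF, normalError_one_sub, hswap, hz, Phi_neg] at hreflect
  rw [abs_le]
  constructor <;> linarith [binomCDF_le_binomCDFRight n hp x, binomCDFRight_le n hσ x]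

theorem Delta_le_Neammanee_general (p : ℝ) (n : ℕ) (hσ : 100 ≤ n * p * (1 - p)) :
    Delta n p ≤ ((1 + max p (1 - p)) / (3 * √(2 * π))) / √(n * p * (1 - p)) +
      0.146 / (n * p * (1 - p)) := by
  refine ciSup_le fun x => ?_
  rw [mul_assoc] at hσ ⊢
  refine (abs_binomCDF_sub_Phi_le n hσ x).trans_eq ?_
  rw [normalError, phi_zero]
  field_simp

end

/-- For `0 < p ≤ 0.5`, `q = 1 − p`, and `n` with `σ² = npq ≥ 100`:
`Δ_n(p) ≤ ℰ₁(p)/σ + 0.1618/σ²`, where `ℰ₁(p) = (2 − p)/(3√(2π))`. -/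
theorem Delta_le_Neammanee (p : ℝ) (hp0 : 0 < p) (hp1 : p ≤ 0.5)
    (n : ℕ) (hσ : 100 ≤ n * p * (1 - p)) :
    Delta n p ≤
      ((2 - p) / (3 * Real.sqrt (2 * Real.pi))) / Real.sqrt (n * p * (1 - p)) +
        0.1618 / (n * p * (1 - p)) := by
  have hmax : 1 + max p (1 - p) = 2 - p := by rw [max_eq_right] <;> linarith
  rw [← hmax]
  exact (Delta_le_Neammanee_general p n hσ).trans (by gcongr; norm_num)
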